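/- For every integer n ≥ 7, the number of Dyck paths D ∈ D̂_n with x_1(D) ∉ {y_2(D), y_2(D)+1} equals binom(n-5, 2)·M_{n-7}. -/

import Mathlib

/-- A Dyck path of semilength `n`, encoded as a word on `Bool`
(`true` = up step `u`, `false` = down step `d`). -/
def IsDyckWord (n : ℕ) (w : List Bool) : Prop :=
  w.length = 2 * n ∧ w.count true = n ∧ w.count false = n ∧
    ∀ p : List Bool, p <+: w → p.count false ≤ p.count true

/-- The (0-based) indices of the up steps of `w`. -/
def upIdxs (w : List Bool) : List ℕ := w.findIdxs (· == true)

/-- The (0-based) indices of the down steps of `w`. -/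
def downIdxs (w : List Bool) : List ℕ := w.findIdxs (· == false)

/-- `rStat w i` is the number of `d`'s strictly between the `i`-th and the
`(i+1)`-st `u` of `w` (with `i` 1-indexed). -/
def rStat (w : List Bool) (i : ℕ) : ℕ :=
  ((w.take ((upIdxs w).getD i 0)).drop ((upIdxs w).getD (i - 1) 0 + 1)).count false

/-- `sStat w i` is the number of `u`'s strictly between the `i`-th and the
`(i+1)`-st `d` of `w` (with `i` 1-indexed). -/
def sStat (w : List Bool) (i : ℕ) : ℕ :=
  ((w.take ((downIdxs w).getD i 0)).drop ((downIdxs w).getD (i - 1) 0 + 1)).count true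

/-- The statistic `L(D) = ∏_{i=1}^{n-1} C(r_i + s_i, r_i)` of a Dyck path of semilength `n`. -/
def LStat (n : ℕ) (w : List Bool) : ℕ :=
  ∏ i ∈ Finset.Icc 1 (n - 1), Nat.choose (rStat w i + sStat w i) (rStat w i)

/-- `dyckL n k` = the set `𝒟ₙᵏ` of Dyck paths of semilength `n` with `L(D) = k`. -/
def dyckL (n k : ℕ) : Set (List Bool) := {w | IsDyckWord n w ∧ LStat n w = k}

/-- A Motzkin path, encoded as a word on `Option Bool`
(`some true` = up, `some false` = down, `none` = horizontal). -/
def IsMotzkinWord (w : List (Option Bool)) : Prop :=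
  w.count (some false) = w.count (some true) ∧
    ∀ p : List (Option Bool), p <+: w → p.count (some false) ≤ p.count (some true)

/-- `motzkin n` = the `n`-th Motzkin number `Mₙ`, the number of Motzkin paths of length `n`. -/
noncomputable def motzkin (n : ℕ) : ℕ :=
  {w : List (Option Bool) | w.length = n ∧ IsMotzkinWord w}.ncard

/-- The Motzkin ballot number `T_{n,k}`: the number of Motzkin paths of length `n`
whose first down step is in position `k` (1-indexed); by convention `T_{k-1,k} = 1`,
counting the path of `k-1` horizontal steps. -/
noncomputable def motzkinBallot (n k : ℕ) : ℕ :=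
  if n + 1 = k then 1
  else
    {w : List (Option Bool) | w.length = n ∧ IsMotzkinWord w ∧
      w.getD (k - 1) none = some false ∧ ∀ j < k - 1, w.getD j none ≠ some false}.ncard

/-- Motzkin numbers with integer index: `Mᵢ = 0` for `i < 0`. -/
noncomputable def motzkinZ (i : ℤ) : ℤ := if 0 ≤ i then (motzkin i.toNat : ℤ) else 0

/-- Motzkin ballot numbers with integer first index: `T_{n,k} = 0` for `n < 0`. -/
noncomputable def motzkinBallotZ (n : ℤ) (k : ℕ) : ℤ :=
  if 0 ≤ n then (motzkinBallot n.toNat k : ℤ) else 0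

/-- The set of returns of a Dyck path `w` of semilength `n`:
indices `1 ≤ k ≤ n` such that the path touches the `x`-axis after `2k` steps. -/
def returns (n : ℕ) (w : List Bool) : Finset ℕ :=
  (Finset.Icc 1 n).filter fun k => (w.take (2 * k)).count false = (w.take (2 * k)).count true

/-- `dyckRS n r s` = the set `𝒟ₙ^{r,s}` of Dyck paths of semilength `n` having exactly one
index `i` with `rᵢ > 0` and `sᵢ > 0`, and such that at that index `rᵢ = r` and `sᵢ = s`. -/
def dyckRS (n r s : ℕ) : Set (List Bool) :=
  {w | IsDyckWord n w ∧ ∃ i ∈ Finset.Icc 1 (n - 1),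
    (0 < rStat w i ∧ 0 < sStat w i) ∧ rStat w i = r ∧ sStat w i = s ∧
      ∀ j ∈ Finset.Icc 1 (n - 1), 0 < rStat w j ∧ 0 < sStat w j → j = i}

/-- `twoStars n w k₁ k₂` says that `k₁ < k₂` are exactly the two indices `i` of `w`
with `rᵢ > 0` and `sᵢ > 0`. -/
def twoStars (n : ℕ) (w : List Bool) (k₁ k₂ : ℕ) : Prop :=
  k₁ ∈ Finset.Icc 1 (n - 1) ∧ k₂ ∈ Finset.Icc 1 (n - 1) ∧ k₁ < k₂ ∧
    (0 < rStat w k₁ ∧ 0 < sStat w k₁) ∧ (0 < rStat w k₂ ∧ 0 < sStat w k₂) ∧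
    ∀ j ∈ Finset.Icc 1 (n - 1), 0 < rStat w j ∧ 0 < sStat w j → j = k₁ ∨ j = k₂

/-- `xStat w k` = the number of indices `i < k` with `rᵢ = 0` and `sᵢ > 0`. -/
def xStat (w : List Bool) (k : ℕ) : ℕ :=
  ((Finset.Ico 1 k).filter fun i => rStat w i = 0 ∧ 0 < sStat w i).card

/-- `yStat w k` = the number of indices `i < k` with `rᵢ > 0` and `sᵢ = 0`. -/
def yStat (w : List Bool) (k : ℕ) : ℕ :=
  ((Finset.Ico 1 k).filter fun i => 0 < rStat w i ∧ sStat w i = 0).card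

/-- The generating function `m(x) = Σ Mₙ xⁿ` of the Motzkin numbers, over `ℚ`. -/
noncomputable def motzkinGF : PowerSeries ℚ := PowerSeries.mk fun n => (motzkin n : ℚ)


/-! ### Gap lists -/

/-- The numbers of letters of `w` before, between and after the occurrences of `c`. -/
def gapList (c : Bool) : List Bool → List ℕ
  | [] => [0]
  | b :: w => if b = c then 0 :: gapList c w else (gapList c w).modifyHead (· + 1)

/-- The number of letters other than `c` between the `i`-th and the `(i+1)`-st `c` of `w`. -/
def gapStat (c : Bool) (w : List Bool) (i : ℕ) : ℕ :=
  ((w.take ((w.findIdxs (· == c)).getD i 0)).drop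
    ((w.findIdxs (· == c)).getD (i - 1) 0 + 1)).count (!c)

theorem gapList_length (c : Bool) (w : List Bool) :
    (gapList c w).length = w.count c + 1 := by
  induction w with
  | nil => rfl
  | cons b w ih => by_cases h : b = c <;> simp [gapList, h, ih]

theorem findIdxs_getD_succ (c : Bool) (w : List Bool) (i : ℕ) (hi : i < w.count c) :
    (w.findIdxs (· == c) 1).getD i 0 = (w.findIdxs (· == c)).getD i 0 + 1 := by
  have hl : i < (w.findIdxs (· == c)).length := by
    simpa [List.count] using hi
  rw [List.findIdxs_start]
  simp [List.getD_eq_getElem?_getD, List.getElem?_eq_getElem hl]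

theorem count_take_findIdxs_zero (c : Bool) (w : List Bool) (h : 0 < w.count c) :
    (w.take ((w.findIdxs (· == c)).getD 0 0)).count (!c) = (gapList c w).getD 0 0 := by
  induction w with
  | nil => simp at h
  | cons b w ih =>
    by_cases hb : b = c
    · simp [gapList, hb, List.findIdxs_cons]
    · have h' : 0 < w.count c := by simpa [hb] using h
      have hb' : b = !c := by cases b <;> cases c <;> simp_all
      have hg : gapList c w ≠ [] := by
        intro h0; have := gapList_length c w; simp [h0] at this
      obtain ⟨a, l, hl⟩ := List.exists_cons_of_ne_nil hg
      have e := findIdxs_getD_succ c w 0 h'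
      rw [hl] at ih
      simp [gapList, hb, List.findIdxs_cons, hl] at ih e ⊢
      rw [e]
      simp [hb', ih (List.count_pos_iff.1 h')]

theorem gapStat_eq (c : Bool) (w : List Bool) (i : ℕ) (hi : 1 ≤ i) (h : i < w.count c) :
    gapStat c w i = (gapList c w).getD i 0 := by
  induction w generalizing i with
  | nil => simp at h
  | cons b w ih =>
    obtain ⟨i, rfl⟩ := Nat.exists_eq_add_of_le' hi
    by_cases hb : b = c
    · subst hb
      have h' : i < w.count b := by simpa using h
      have e := findIdxs_getD_succ b w i h'
      rcases Nat.eq_zero_or_pos i with rfl | hi'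
      · have := count_take_findIdxs_zero b w h'
        simp [gapStat, gapList, List.findIdxs_cons] at e this ⊢
        rw [e]
        simpa using this
      · have := ih i hi' h'
        obtain ⟨i, rfl⟩ := Nat.exists_eq_add_of_le' hi'
        have e' := findIdxs_getD_succ b w i (by omega)
        simp [gapStat, gapList, List.findIdxs_cons] at e e' this ⊢
        rw [e, e']
        simpa using this
    · have h' : i + 1 < w.count c := by simpa [hb] using h
      have := ih (i + 1) hi h'
      have hg : gapList c w ≠ [] := by
        intro h0; have := gapList_length c w; simp [h0] at this
      obtain ⟨a, l, hl⟩ := List.exists_cons_of_ne_nil hg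
      have e := findIdxs_getD_succ c w _ h'
      have e' := findIdxs_getD_succ c w i (by omega)
      rw [hl] at this
      simp [gapStat, gapList, List.findIdxs_cons, hl, hb] at e e' this ⊢
      rw [e, e']
      simpa using this

theorem rStat_eq (w : List Bool) (i : ℕ) (hi : 1 ≤ i) (h : i < w.count true) :
    rStat w i = (gapList true w).getD i 0 := gapStat_eq true w i hi h

theorem sStat_eq (w : List Bool) (i : ℕ) (hi : 1 ≤ i) (h : i < w.count false) :
    sStat w i = (gapList false w).getD i 0 := gapStat_eq false w i hi h

/-! ### Dyck words from marked ascents and descents -/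

mutual
/-- The word obtained by reading up steps, switching to down steps after each marked up step
(marks in `a`), and back to up steps after each marked down step (marks in `b`). -/
def mergeUp : List Bool → List Bool → List Bool
  | [], b => true :: List.replicate (b.length + 1) false
  | false :: a, b => true :: mergeUp a b
  | true :: a, b => true :: mergeDown a b
termination_by a b => a.length + b.length
/-- The variant of `mergeUp` that starts by reading down steps. -/
def mergeDown : List Bool → List Bool → List Bool
  | a, [] => false :: List.replicate (a.length + 1) true
  | a, false :: b => false :: mergeDown a b
  | a, true :: b => false :: mergeUp a b
termination_by a b => a.length + b.length
end

/-- One plus the number of unmarked entries of `l` between its `j`-th and `(j+1)`-st mark, where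
the end of the list is preceded by the start and followed by an extra mark. -/
def markGap : ℕ → List Bool → ℕ
  | 0, [] => 1
  | _ + 1, [] => 0
  | 0, true :: _ => 1
  | 0, false :: l => markGap 0 l + 1
  | j + 1, true :: l => markGap j l
  | j + 1, false :: l => markGap (j + 1) l

/-- The list of mark gaps of `b`, starting with the `j`-th, placed at the marks of `a`. -/
def gapsAtMarks : ℕ → List Bool → List Bool → List ℕ
  | j, [], b => [markGap j b]
  | j, false :: a, b => 0 :: gapsAtMarks j a b
  | j, true :: a, b => markGap j b :: gapsAtMarks (j + 1) a b

theorem gapsAtMarks_succ_true (j : ℕ) (a b : List Bool) :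
    gapsAtMarks (j + 1) a (true :: b) = gapsAtMarks j a b := by
  induction a generalizing j with
  | nil => simp [gapsAtMarks, markGap]
  | cons x a ih => cases x <;> simp [gapsAtMarks, markGap, ih]

theorem gapsAtMarks_succ_false (j : ℕ) (a b : List Bool) :
    gapsAtMarks (j + 1) a (false :: b) = gapsAtMarks (j + 1) a b := by
  induction a generalizing j with
  | nil => simp [gapsAtMarks, markGap]
  | cons x a ih => cases x <;> simp [gapsAtMarks, markGap, ih]

theorem markGap_zero_of_count_eq_zero (b : List Bool) (h : b.count true = 0) :
    markGap 0 b = b.length + 1 := by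
  induction b with
  | nil => rfl
  | cons x b ih => cases x <;> simp_all [markGap]

theorem gapsAtMarks_of_count_eq_zero (b : List Bool) (h : b.count true = 0) :
    gapsAtMarks 1 b [] = List.replicate (b.length + 1) 0 := by
  induction b with
  | nil => rfl
  | cons x b ih => cases x <;> simp_all [gapsAtMarks, List.replicate_succ]

theorem gapList_true_replicate (m : ℕ) : gapList true (List.replicate m false) = [m] := by
  induction m with
  | zero => rfl
  | succ m ih => simp [List.replicate_succ, gapList, ih]

theorem gapList_false_replicate (m : ℕ) :
    gapList false (List.replicate m false) = List.replicate (m + 1) 0 := by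
  induction m with
  | zero => rfl
  | succ m ih => simp [List.replicate_succ, gapList, ih]

/-- The gap lists of merged words. -/
theorem gapList_merge (N : ℕ) : ∀ a b : List Bool, a.length + b.length = N →
    (a.count true = b.count true →
      gapList true (mergeUp a b) = 0 :: gapsAtMarks 0 a b ∧
      gapList false (mergeUp a b) = markGap 0 a :: gapsAtMarks 1 b a) ∧
    (b.count true = a.count true + 1 →
      gapList true (mergeDown a b) = markGap 0 b :: gapsAtMarks 1 a b ∧
      gapList false (mergeDown a b) = 0 :: gapsAtMarks 0 b a) := by
  induction N with
  | zero =>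
    intro a b h
    obtain rfl : a = [] := List.eq_nil_of_length_eq_zero (by omega)
    obtain rfl : b = [] := List.eq_nil_of_length_eq_zero (by simpa using h)
    simp [mergeUp, gapList, gapsAtMarks, markGap]
  | succ N ih =>
    intro a b h
    constructor
    · intro hc
      match a with
      | [] =>
        have hb : b.count true = 0 := by simpa using hc.symm
        simp [mergeUp, gapList, gapList_true_replicate, gapList_false_replicate, gapsAtMarks,
          markGap, markGap_zero_of_count_eq_zero b hb, gapsAtMarks_of_count_eq_zero b hb,
          List.replicate_succ]
      | false :: a =>
        have := (ih a b (by simp at h; omega)).1 (by simpa using hc)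
        simp [mergeUp, gapList, gapsAtMarks, markGap, this, gapsAtMarks_succ_false]
      | true :: a =>
        have := (ih a b (by simp at h; omega)).2 (by simpa using hc.symm)
        simp [mergeUp, gapList, gapsAtMarks, markGap, this, gapsAtMarks_succ_true]
    · intro hc
      match b with
      | [] => simp at hc
      | false :: b =>
        have := (ih a b (by simp at h; omega)).2 (by simpa using hc)
        simp [mergeDown, gapList, gapsAtMarks, markGap, this, gapsAtMarks_succ_false]
      | true :: b =>
        have := (ih a b (by simp at h; omega)).1 (by simpa using hc.symm)
        simp [mergeDown, gapList, gapsAtMarks, markGap, this, gapsAtMarks_succ_true]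

theorem gapsAtMarks_getD (j : ℕ) (a b : List Bool) (i : ℕ) (hi : i < a.length) :
    (gapsAtMarks j a b).getD i 0 =
      if a.getD i false then markGap (j + (a.take i).count true) b else 0 := by
  induction a generalizing i j with
  | nil => simp at hi
  | cons x a ih =>
    cases i with
    | zero => cases x <;> simp [gapsAtMarks]
    | succ i =>
      have h' : i < a.length := by simpa using hi
      cases x
      · simpa [gapsAtMarks] using ih j i h'
      · have := ih (j + 1) i h'
        simp only [gapsAtMarks, List.getD_cons_succ, List.take_succ_cons, List.count_cons_self]
        rw [this, Nat.add_right_comm, Nat.add_assoc]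

theorem markGap_pos (j : ℕ) (b : List Bool) (h : j ≤ b.count true) : 0 < markGap j b := by
  induction b generalizing j with
  | nil => obtain rfl : j = 0 := by simpa using h
           simp [markGap]
  | cons x b ih =>
    cases j <;> cases x <;> simp_all [markGap]

/-- `w` is a lattice path from height `t` to height `0` that stays nonnegative. -/
def DyckFrom : ℕ → List Bool → Prop
  | t, [] => t = 0
  | t, true :: w => DyckFrom (t + 1) w
  | 0, false :: _ => False
  | t + 1, false :: w => DyckFrom t w

theorem dyckFrom_iff (t : ℕ) (w : List Bool) :
    DyckFrom t w ↔ w.count false = t + w.count true ∧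
      ∀ p : List Bool, p <+: w → p.count false ≤ t + p.count true := by
  induction w generalizing t with
  | nil => simp [DyckFrom, eq_comm]
  | cons x w ih =>
    cases x
    · cases t with
      | zero =>
        simp only [DyckFrom, false_iff, not_and]
        intro _ h
        simpa using h [false] (by simp)
      | succ t =>
        simp only [DyckFrom, ih, List.prefix_cons_iff]
        constructor
        · rintro ⟨h1, h2⟩
          refine ⟨by simp [h1]; omega, ?_⟩
          rintro p (rfl | ⟨q, rfl, hq⟩)
          · simp
          · have := h2 q hq
            simp; omega
        · rintro ⟨h1, h2⟩
          refine ⟨by simp at h1; omega, fun q hq => ?_⟩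
          have := h2 (false :: q) (Or.inr ⟨q, rfl, hq⟩)
          simp at this; omega
    · simp only [DyckFrom, ih, List.prefix_cons_iff]
      constructor
      · rintro ⟨h1, h2⟩
        refine ⟨by simp [h1]; omega, ?_⟩
        rintro p (rfl | ⟨q, rfl, hq⟩)
        · simp
        · have := h2 q hq
          simp; omega
      · rintro ⟨h1, h2⟩
        refine ⟨by simp at h1; omega, fun q hq => ?_⟩
        have := h2 (true :: q) (Or.inr ⟨q, rfl, hq⟩)
        simp at this; omega

theorem count_true_add_count_false (w : List Bool) :
    w.count true + w.count false = w.length := by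
  induction w with
  | nil => rfl
  | cons x w ih => cases x <;> simp <;> omega

theorem isDyckWord_iff (n : ℕ) (w : List Bool) :
    IsDyckWord n w ↔ w.length = 2 * n ∧ DyckFrom 0 w := by
  have := count_true_add_count_false w
  rw [IsDyckWord, dyckFrom_iff]
  simp only [Nat.zero_add]
  constructor
  · rintro ⟨h1, h2, h3, h4⟩
    exact ⟨h1, by omega, h4⟩
  · rintro ⟨h1, h2, h3⟩
    exact ⟨h1, by omega, by omega, h3⟩

theorem dyckFrom_replicate (t : ℕ) : DyckFrom t (List.replicate t false) := by
  induction t with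
  | zero => rfl
  | succ t ih => simpa [List.replicate_succ, DyckFrom] using ih

theorem dyckFrom_merge (N : ℕ) : ∀ (a b : List Bool) (t : ℕ), a.length + b.length = N →
    a.length + t = b.length →
    (a.count true = b.count true →
      (DyckFrom t (mergeUp a b) ↔
        ∀ i, (a.take i).count true ≤ (b.take (i + t)).count true)) ∧
    (b.count true = a.count true + 1 →
      (DyckFrom t (mergeDown a b) ↔
        ∀ i, (a.take i).count true + 1 ≤ (b.take (i + t)).count true)) := by
  induction N with
  | zero =>
    intro a b t h ht
    obtain rfl : a = [] := List.eq_nil_of_length_eq_zero (by omega)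
    obtain rfl : b = [] := List.eq_nil_of_length_eq_zero (by simpa using h)
    obtain rfl : t = 0 := by simpa using ht
    simp [mergeUp, DyckFrom]
  | succ N ih =>
    intro a b t h ht
    constructor
    · intro hc
      match a with
      | [] =>
        have e : b.length = t := by simpa using ht.symm
        simpa [mergeUp, DyckFrom, e] using dyckFrom_replicate (t + 1)
      | false :: a =>
        simp only [List.length_cons] at h ht
        rw [mergeUp, DyckFrom, (ih a b (t + 1) (by omega) (by omega)).1 (by simpa using hc)]
        constructor
        · rintro H (_ | i)
          · simp
          · simpa [Nat.add_right_comm, Nat.add_assoc] using H i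
        · intro H i
          simpa [Nat.add_right_comm, Nat.add_assoc] using H (i + 1)
      | true :: a =>
        simp only [List.length_cons] at h ht
        rw [mergeUp, DyckFrom, (ih a b (t + 1) (by omega) (by omega)).2 (by simpa using hc.symm)]
        constructor
        · rintro H (_ | i)
          · simp
          · simpa [Nat.add_right_comm, Nat.add_assoc] using H i
        · intro H i
          simpa [Nat.add_right_comm, Nat.add_assoc] using H (i + 1)
    · intro hc
      match b, t with
      | [], _ => simp at hc
      | x :: b, 0 =>
        refine iff_of_false (by cases x <;> simp [mergeDown, DyckFrom]) fun H => ?_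
        simpa using H 0
      | false :: b, t + 1 =>
        simp only [List.length_cons] at h ht
        rw [mergeDown, DyckFrom, (ih a b t (by omega) (by omega)).2 (by simpa using hc)]
        simp [← Nat.add_assoc]
      | true :: b, t + 1 =>
        simp only [List.length_cons] at h ht
        rw [mergeDown, DyckFrom, (ih a b t (by omega) (by omega)).1 (by simpa using hc.symm)]
        simp [← Nat.add_assoc]

theorem mergeUp_length (N : ℕ) : ∀ a b : List Bool, a.length + b.length = N →
    (mergeUp a b).length = a.length + b.length + 2 ∧
      (mergeDown a b).length = a.length + b.length + 2 := by
  induction N with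
  | zero =>
    intro a b h
    obtain rfl : a = [] := List.eq_nil_of_length_eq_zero (by omega)
    obtain rfl : b = [] := List.eq_nil_of_length_eq_zero (by simpa using h)
    simp [mergeUp, mergeDown]
  | succ N ih =>
    intro a b h
    constructor
    · match a with
      | [] => simp [mergeUp]
      | false :: a =>
        have := (ih a b (by simp at h; omega)).1
        simp [mergeUp, this]; omega
      | true :: a =>
        have := (ih a b (by simp at h; omega)).2
        simp [mergeUp, this]; omega
    · match b with
      | [] => simp [mergeDown]
      | false :: b =>
        have := (ih a b (by simp at h; omega)).2
        simp [mergeDown, this]; omega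
      | true :: b =>
        have := (ih a b (by simp at h; omega)).1
        simp [mergeDown, this]; omega

theorem exists_merge (w : List Bool) (t : ℕ) (hw : DyckFrom t w) :
    (w.head? = some true → ∃ a b : List Bool, w = mergeUp a b ∧ a.length + 1 = w.count true ∧
      b.length + 1 = w.count false ∧ a.count true = b.count true) ∧
    (w.head? = some false → 0 < w.count true → ∃ a b : List Bool, w = mergeDown a b ∧
      a.length + 1 = w.count true ∧ b.length + 1 = w.count false ∧
      b.count true = a.count true + 1) := by
  induction w generalizing t with
  | nil => simp
  | cons x w ih =>
    cases x
    · refine ⟨by simp, fun _ hc => ?_⟩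
      obtain _ | t := t
      · exact hw.elim
      have hw' : DyckFrom t w := hw
      have hc' : 0 < w.count true := by simpa using hc
      cases w with
      | nil => simp at hc'
      | cons y w =>
        cases y
        · obtain ⟨a, b, h1, h2, h3, h4⟩ := (ih t hw').2 rfl hc'
          refine ⟨a, false :: b, by rw [mergeDown, h1], by simpa using h2, ?_, by simpa using h4⟩
          simp at h3 ⊢; omega
        · obtain ⟨a, b, h1, h2, h3, h4⟩ := (ih t hw').1 rfl
          refine ⟨a, true :: b, by rw [mergeDown, h1], by simpa using h2, ?_, by simp [h4]⟩
          simp at h3 ⊢; omega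
    · refine ⟨fun _ => ?_, by simp⟩
      have hw' : DyckFrom (t + 1) w := hw
      cases w with
      | nil => simp [DyckFrom] at hw'
      | cons y w =>
        cases y
        · by_cases hc : 0 < w.count true
          · obtain ⟨a, b, h1, h2, h3, h4⟩ := (ih (t + 1) hw').2 rfl (by simpa using hc)
            refine ⟨true :: a, b, by rw [mergeUp, h1], ?_, by simpa using h3, by simp [h4]⟩
            simp at h2 ⊢; omega
          · have e : w = List.replicate w.length false := by
              rw [List.eq_replicate_iff]
              refine ⟨rfl, fun y hy => ?_⟩
              cases y
              · rfl
              · exact absurd (List.count_pos_iff.2 hy) hc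
            refine ⟨[], List.replicate w.length false, ?_, ?_, ?_, ?_⟩
            · simp [mergeUp, List.replicate_succ, ← e]
            · simp; omega
            · have := count_true_add_count_false w
              simp; omega
            · simp [List.count_replicate]
        · obtain ⟨a, b, h1, h2, h3, h4⟩ := (ih (t + 1) hw').1 rfl
          refine ⟨false :: a, b, by rw [mergeUp, h1], ?_, by simpa using h3, by simpa using h4⟩
          simp at h2 ⊢; omega

/-! ### Two-coloured Motzkin words -/

/-- The word whose marked down steps are recorded in the first components of `V` and whose marked
up steps are recorded in the second components. -/
def pathOf (V : List (Bool × Bool)) : List Bool := mergeUp (V.map Prod.snd) (V.map Prod.fst)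

/-- Every prefix of `V` has at least as many marks in the first component as in the second, with
equality for `V` itself. -/
def IsBalanced (V : List (Bool × Bool)) : Prop :=
  (V.map Prod.snd).count true = (V.map Prod.fst).count true ∧
    ∀ i, ((V.take i).map Prod.snd).count true ≤ ((V.take i).map Prod.fst).count true

theorem isDyckWord_pathOf {V : List (Bool × Bool)} (h : IsBalanced V) :
    IsDyckWord (V.length + 1) (pathOf V) := by
  rw [isDyckWord_iff]
  refine ⟨?_, ?_⟩
  · rw [pathOf, (mergeUp_length _ _ _ rfl).1]
    simp; omega
  · rw [pathOf, (dyckFrom_merge _ _ _ 0 rfl (by simp)).1 h.1]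
    simpa [List.map_take] using h.2

theorem exists_pathOf {m : ℕ} {w : List Bool} (h : IsDyckWord (m + 1) w) :
    ∃ V : List (Bool × Bool), V.length = m ∧ IsBalanced V ∧ w = pathOf V := by
  have hD := ((isDyckWord_iff _ _).1 h).2
  obtain ⟨h0, h1, h2, h3⟩ := h
  have hh : w.head? = some true := by
    match w with
    | [] => simp at h0
    | true :: w => rfl
    | false :: w => exact hD.elim
  obtain ⟨a, b, e, ha, hb, hc⟩ := (exists_merge w 0 hD).1 hh
  have hlen : a.length = b.length := by omega
  have e1 : (b.zip a).map Prod.snd = a := by rw [List.map_snd_zip]; omega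
  have e2 : (b.zip a).map Prod.fst = b := by rw [List.map_fst_zip]; omega
  refine ⟨b.zip a, by simp; omega, ⟨by rw [e1, e2, hc], ?_⟩, by rw [pathOf, e1, e2, e]⟩
  rw [e, (dyckFrom_merge _ _ _ 0 rfl (by omega)).1 hc] at hD
  simpa [List.map_take, e1, e2] using hD

theorem rStat_pathOf {V : List (Bool × Bool)} (h : IsBalanced V) (i : ℕ) (hi : i < V.length) :
    rStat (pathOf V) (i + 1) = if V[i].2 then
      markGap (((V.take i).map Prod.snd).count true) (V.map Prod.fst) else 0 := by
  have hc := (isDyckWord_pathOf h).2.1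
  rw [rStat_eq _ _ (by omega) (by omega), pathOf, ((gapList_merge _ _ _ rfl).1 h.1).1,
    List.getD_cons_succ, gapsAtMarks_getD _ _ _ _ (by simpa using hi)]
  simp [List.map_take, hi]

theorem sStat_pathOf {V : List (Bool × Bool)} (h : IsBalanced V) (i : ℕ) (hi : i < V.length) :
    sStat (pathOf V) (i + 1) = if V[i].1 then
      markGap (((V.take i).map Prod.fst).count true + 1) (V.map Prod.snd) else 0 := by
  have hc := (isDyckWord_pathOf h).2.2.1
  rw [sStat_eq _ _ (by omega) (by omega), pathOf, ((gapList_merge _ _ _ rfl).1 h.1).2,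
    List.getD_cons_succ, gapsAtMarks_getD _ _ _ _ (by simpa using hi)]
  simp [List.map_take, hi, Nat.add_comm]

theorem count_take_lt (l : List Bool) (i : ℕ) (hi : i < l.length) (h : l[i] = true) :
    (l.take i).count true + 1 ≤ l.count true := by
  conv_rhs => rw [← List.take_append_drop i l, List.drop_eq_getElem_cons hi, h]
  simp

theorem rStat_pathOf_pos {V : List (Bool × Bool)} (h : IsBalanced V) (i : ℕ)
    (hi : i < V.length) : 0 < rStat (pathOf V) (i + 1) ↔ V[i].2 = true := by
  rw [rStat_pathOf h i hi]
  split_ifs with hV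
  · refine iff_of_true (markGap_pos _ _ ?_) hV
    have := count_take_lt (V.map Prod.snd) i (by simpa using hi) (by simpa using hV)
    rw [← h.1, List.map_take]; omega
  · simpa using hV

theorem sStat_pathOf_pos {V : List (Bool × Bool)} (h : IsBalanced V) (i : ℕ)
    (hi : i < V.length) : 0 < sStat (pathOf V) (i + 1) ↔ V[i].1 = true := by
  rw [sStat_pathOf h i hi]
  split_ifs with hV
  · refine iff_of_true (markGap_pos _ _ ?_) hV
    have := count_take_lt (V.map Prod.fst) i (by simpa using hi) (by simpa using hV)
    rw [h.1, List.map_take]; omega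
  · simpa using hV

theorem pathOf_injOn {V V' : List (Bool × Bool)} (h : IsBalanced V) (h' : IsBalanced V')
    (hl : V.length = V'.length) (e : pathOf V = pathOf V') : V = V' := by
  refine List.ext_getElem hl fun i hi hi' => Prod.ext ?_ ?_
  · rw [Bool.eq_iff_iff, ← sStat_pathOf_pos h i hi, ← sStat_pathOf_pos h' i hi', e]
  · rw [Bool.eq_iff_iff, ← rStat_pathOf_pos h i hi, ← rStat_pathOf_pos h' i hi', e]

theorem card_filter_Ico_eq_count {α : Type*} [BEq α] [LawfulBEq α] (V : List α) (x : α)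
    (P : ℕ → Prop)
    [DecidablePred P] (k : ℕ) (hk : k ≤ V.length)
    (hP : ∀ i (hi : i < V.length), P (i + 1) ↔ V[i] = x) :
    ((Finset.Ico 1 (k + 1)).filter P).card = (V.take k).count x := by
  induction k with
  | zero => simp
  | succ k ih =>
    have hk' : k < V.length := by omega
    rw [Finset.Ico_add_one_right_eq_Icc, ← Finset.insert_Icc_right_eq_Icc_add_one (by omega),
      Finset.filter_insert, ← Finset.Ico_add_one_right_eq_Icc, List.take_succ_eq_append_getElem hk',
      List.count_append, ← ih (by omega)]
    by_cases hx : V[k] = x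
    · rw [if_pos ((hP k hk').2 hx), Finset.card_insert_of_notMem (by simp)]
      simp [hx]
    · rw [if_neg (mt (hP k hk').1 hx)]
      simp [hx]

theorem xStat_pathOf {V : List (Bool × Bool)} (h : IsBalanced V) (k : ℕ) (hk : k ≤ V.length) :
    xStat (pathOf V) (k + 1) = (V.take k).count (true, false) := by
  refine card_filter_Ico_eq_count V _
    (fun i => rStat (pathOf V) i = 0 ∧ 0 < sStat (pathOf V) i) k hk fun i hi => ?_
  rw [sStat_pathOf_pos h i hi, ← Nat.le_zero, ← not_lt, rStat_pathOf_pos h i hi, Prod.ext_iff]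
  simp [and_comm]

theorem yStat_pathOf {V : List (Bool × Bool)} (h : IsBalanced V) (k : ℕ) (hk : k ≤ V.length) :
    yStat (pathOf V) (k + 1) = (V.take k).count (false, true) := by
  refine card_filter_Ico_eq_count V _
    (fun i => 0 < rStat (pathOf V) i ∧ sStat (pathOf V) i = 0) k hk fun i hi => ?_
  rw [rStat_pathOf_pos h i hi, ← Nat.le_zero, ← not_lt, sStat_pathOf_pos h i hi, Prod.ext_iff]
  simp [and_comm]

theorem two_le_choose {r s : ℕ} (hr : 0 < r) (hs : 0 < s) : 2 ≤ (r + s).choose r := by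
  obtain ⟨r, rfl⟩ := Nat.exists_eq_add_of_le' hr
  obtain ⟨s, rfl⟩ := Nat.exists_eq_add_of_le' hs
  rw [show r + 1 + (s + 1) = (r + 1 + s) + 1 by omega, Nat.choose_succ_succ']
  have h1 := Nat.choose_pos (show r ≤ r + 1 + s by omega)
  have h2 := Nat.choose_pos (show r + 1 ≤ r + 1 + s by omega)
  omega

theorem choose_eq_two_iff {r s : ℕ} (hr : 0 < r) (hs : 0 < s) :
    (r + s).choose r = 2 ↔ r = 1 ∧ s = 1 := by
  refine ⟨fun h => ?_, by rintro ⟨rfl, rfl⟩; rfl⟩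
  obtain ⟨r, rfl⟩ := Nat.exists_eq_add_of_le' hr
  obtain ⟨s, rfl⟩ := Nat.exists_eq_add_of_le' hs
  rw [show r + 1 + (s + 1) = (r + 1 + s) + 1 by omega, Nat.choose_succ_succ'] at h
  have h1 := Nat.choose_pos (show r ≤ r + 1 + s by omega)
  have h2 := Nat.choose_pos (show r + 1 ≤ r + 1 + s by omega)
  constructor
  · rcases Nat.eq_zero_or_pos r with rfl | hr'
    · rfl
    · have := two_le_choose hr' (show 0 < s + 1 by omega)
      rw [show r + (s + 1) = r + 1 + s by omega] at this
      omega
  · rcases Nat.eq_zero_or_pos s with rfl | hs'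
    · rfl
    · have := two_le_choose (show 0 < r + 1 by omega) hs'
      omega

theorem LStat_eq_four_iff {n : ℕ} {w : List Bool} {k₁ k₂ : ℕ} (h : twoStars n w k₁ k₂) :
    LStat n w = 4 ↔ rStat w k₁ = 1 ∧ sStat w k₁ = 1 ∧ rStat w k₂ = 1 ∧ sStat w k₂ = 1 := by
  obtain ⟨h1, h2, hlt, ⟨hr1, hs1⟩, ⟨hr2, hs2⟩, hu⟩ := h
  rw [LStat, Finset.prod_eq_mul_of_mem k₁ k₂ h1 h2 hlt.ne]
  · have a1 := two_le_choose hr1 hs1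
    have a2 := two_le_choose hr2 hs2
    have b1 := choose_eq_two_iff hr1 hs1
    have b2 := choose_eq_two_iff hr2 hs2
    rw [← and_assoc, ← b1, ← b2]
    constructor
    · intro h
      constructor <;> nlinarith
    · rintro ⟨h1, h2⟩
      simp [h1, h2]
  · intro c hc ⟨hc1, hc2⟩
    by_contra hne
    have hr : 0 < rStat w c := Nat.pos_of_ne_zero fun h0 => hne (by simp [h0])
    have hs : 0 < sStat w c := Nat.pos_of_ne_zero fun h0 => hne (by simp [h0])
    rcases hu c hc ⟨hr, hs⟩ with rfl | rfl
    · exact hc1 rfl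
    · exact hc2 rfl

/-- The pair of marks of a Motzkin step. -/
def stepMarks (o : Option Bool) : Bool × Bool := (o == some true, o == some false)

/-- The two-coloured Motzkin word with exactly two doubly marked letters that are separated by
the given words. -/
def starWord (X Y Z : List (Option Bool)) : List (Bool × Bool) :=
  X.map stepMarks ++ (true, true) :: (Y.map stepMarks ++ (true, true) :: Z.map stepMarks)

theorem stepMarks_injective : Function.Injective stepMarks := by decide

theorem stepMarks_ne (o : Option Bool) : stepMarks o ≠ (true, true) := by
  revert o; decide

theorem exists_stepMarks {p : Bool × Bool} (h : p ≠ (true, true)) : ∃ o, stepMarks o = p := by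
  revert p; decide

theorem exists_map_stepMarks (V : List (Bool × Bool)) (h : ∀ p ∈ V, p ≠ (true, true)) :
    ∃ W : List (Option Bool), V = W.map stepMarks := by
  induction V with
  | nil => exact ⟨[], rfl⟩
  | cons p V ih =>
    obtain ⟨o, ho⟩ := exists_stepMarks (h p (by simp))
    obtain ⟨W, hW⟩ := ih fun q hq => h q (by simp [hq])
    exact ⟨o :: W, by simp [ho, hW]⟩

theorem map_fst_map_stepMarks (W : List (Option Bool)) :
    (W.map stepMarks).map Prod.fst = W.map (· == some true) := by
  simp [stepMarks, Function.comp_def]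

theorem map_snd_map_stepMarks (W : List (Option Bool)) :
    (W.map stepMarks).map Prod.snd = W.map (· == some false) := by
  simp [stepMarks, Function.comp_def]

theorem count_true_map_beq (W : List (Option Bool)) (c : Option Bool) :
    (W.map (· == c)).count true = W.count c := by
  induction W with
  | nil => rfl
  | cons x W ih => by_cases h : x = c <;> simp [h, ih]

theorem starWord_length (X Y Z : List (Option Bool)) :
    (starWord X Y Z).length = X.length + Y.length + Z.length + 2 := by
  simp [starWord]; omega

theorem starWord_injective {X Y Z X' Y' Z' : List (Option Bool)}
    (h : starWord X Y Z = starWord X' Y' Z') : X = X' ∧ Y = Y' ∧ Z = Z' := by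
  have key : ∀ (A A' : List (Option Bool)) (B B' : List (Bool × Bool)),
      A.map stepMarks ++ (true, true) :: B = A'.map stepMarks ++ (true, true) :: B' →
      A = A' ∧ B = B' := by
    intro A
    induction A with
    | nil =>
      rintro (_ | ⟨a', A'⟩) B B' h
      · simpa using h
      · simp only [List.map_nil, List.nil_append, List.map_cons, List.cons_append,
          List.cons.injEq] at h
        exact (stepMarks_ne _ h.1.symm).elim
    | cons a A ih =>
      rintro (_ | ⟨a', A'⟩) B B' h
      · simp only [List.map_nil, List.nil_append, List.map_cons, List.cons_append,
          List.cons.injEq] at h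
        exact (stepMarks_ne _ h.1).elim
      · simp only [List.map_cons, List.cons_append, List.cons.injEq] at h
        obtain ⟨rfl, rfl⟩ := ih A' B B' h.2
        exact ⟨by rw [stepMarks_injective h.1], rfl⟩
  obtain ⟨h1, h2⟩ := key _ _ _ _ h
  obtain ⟨h3, h4⟩ := key _ _ _ _ h2
  exact ⟨h1, h3, List.map_injective_iff.2 stepMarks_injective h4⟩

theorem getElem?_append_star (A : List (Option Bool)) (B : List (Bool × Bool)) (i : ℕ) :
    (A.map stepMarks ++ (true, true) :: B)[i]? = some (true, true) ↔
      i = A.length ∨ ∃ j, i = A.length + 1 + j ∧ B[j]? = some (true, true) := by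
  induction A generalizing i with
  | nil => cases i <;> simp [Nat.add_comm 1]
  | cons a A ih =>
    cases i with
    | zero =>
      simp [stepMarks_ne]
      omega
    | succ i =>
      simp only [List.map_cons, List.cons_append, List.getElem?_cons_succ, ih, List.length_cons,
        Nat.add_right_cancel_iff]
      refine or_congr Iff.rfl (exists_congr fun j => and_congr ?_ Iff.rfl)
      omega

theorem starWord_getElem_eq_iff (X Y Z : List (Option Bool)) (i : ℕ)
    (hi : i < (starWord X Y Z).length) :
    (starWord X Y Z)[i] = (true, true) ↔ i = X.length ∨ i = X.length + 1 + Y.length := by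
  have hZ : ∀ j, (Z.map stepMarks)[j]? ≠ some (true, true) := fun j h => by
    obtain ⟨o, -, ho⟩ := List.mem_map.1 (List.mem_of_getElem? h)
    exact stepMarks_ne o ho
  have h : (starWord X Y Z)[i]? = some (true, true) ↔
      i = X.length ∨ i = X.length + 1 + Y.length := by
    rw [starWord, getElem?_append_star]
    simp only [getElem?_append_star, hZ, and_false, exists_false, or_false, exists_eq_right]
  rw [← h, List.getElem?_eq_getElem hi, Option.some_inj]

theorem exists_starWord (V : List (Bool × Bool)) (p q : ℕ) (hpq : p < q) (hq : q < V.length)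
    (h : ∀ i (hi : i < V.length), V[i] = (true, true) ↔ i = p ∨ i = q) :
    ∃ X Y Z, V = starWord X Y Z ∧ X.length = p ∧ X.length + 1 + Y.length = q := by
  have e1 : V = V.take p ++ (true, true) :: V.drop (p + 1) := by
    rw [← (h p (by omega)).2 (Or.inl rfl), ← List.drop_eq_getElem_cons, List.take_append_drop]
  have hp' : q - p - 1 < (V.drop (p + 1)).length := by simp; omega
  have e2 : V.drop (p + 1) = (V.drop (p + 1)).take (q - p - 1) ++
      (true, true) :: V.drop (q + 1) := by
    have : (V.drop (p + 1))[q - p - 1] = (true, true) := by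
      rw [List.getElem_drop, h]; omega
    conv_lhs => rw [← List.take_append_drop (q - p - 1) (V.drop (p + 1))]
    rw [List.drop_eq_getElem_cons hp', this, List.drop_drop]
    congr 3; omega
  obtain ⟨X, hX⟩ := exists_map_stepMarks (V.take p) (by
    intro x hx
    obtain ⟨i, hi, rfl⟩ := List.getElem_of_mem hx
    simp only [List.length_take] at hi
    rw [List.getElem_take, Ne, h]; omega)
  obtain ⟨Y, hY⟩ := exists_map_stepMarks ((V.drop (p + 1)).take (q - p - 1)) (by
    intro x hx
    obtain ⟨i, hi, rfl⟩ := List.getElem_of_mem hx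
    simp only [List.length_take, List.length_drop] at hi
    rw [List.getElem_take, List.getElem_drop, Ne, h]; omega)
  obtain ⟨Z, hZ⟩ := exists_map_stepMarks (V.drop (q + 1)) (by
    intro x hx
    obtain ⟨i, hi, rfl⟩ := List.getElem_of_mem hx
    simp only [List.length_drop] at hi
    rw [List.getElem_drop, Ne, h]; omega)
  have lX := congrArg List.length hX
  have lY := congrArg List.length hY
  simp at lX lY
  refine ⟨X, Y, Z, ?_, by omega, by omega⟩
  rw [starWord, ← hX, ← hY, ← hZ, ← e2, ← e1]

/-- Starting with `u` first marks and `d` second marks, every prefix of `V` has at least as many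
first marks as second marks. -/
def NonnegFrom (u d : ℕ) (V : List (Bool × Bool)) : Prop :=
  ∀ Q, Q <+: V → d + (Q.map Prod.snd).count true ≤ u + (Q.map Prod.fst).count true

theorem nonnegFrom_append (u d : ℕ) (V V' : List (Bool × Bool)) :
    NonnegFrom u d (V ++ V') ↔ NonnegFrom u d V ∧
      NonnegFrom (u + (V.map Prod.fst).count true) (d + (V.map Prod.snd).count true) V' := by
  constructor
  · intro h
    refine ⟨fun Q hQ => h Q (List.prefix_append_of_prefix hQ), fun Q hQ => ?_⟩
    have := h (V ++ Q) ((List.prefix_append_right_inj V).2 hQ)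
    simpa [Nat.add_assoc] using this
  · rintro ⟨h, h'⟩ Q hQ
    rcases List.prefix_or_prefix_of_prefix hQ (List.prefix_append V V') with hQ' | ⟨R, rfl⟩
    · exact h Q hQ'
    · have := h' R ((List.prefix_append_right_inj V).1 hQ)
      simpa [Nat.add_assoc] using this

theorem nonnegFrom_map_stepMarks (u d : ℕ) (W : List (Option Bool)) :
    NonnegFrom u d (W.map stepMarks) ↔
      ∀ Q, Q <+: W → d + Q.count (some false) ≤ u + Q.count (some true) := by
  constructor
  · intro h Q hQ
    simpa only [map_fst_map_stepMarks, map_snd_map_stepMarks, count_true_map_beq]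
      using h _ (hQ.map stepMarks)
  · intro h Q hQ
    obtain ⟨Q', hQ', rfl⟩ := List.prefix_map_iff.1 hQ
    simpa only [map_fst_map_stepMarks, map_snd_map_stepMarks, count_true_map_beq] using h Q' hQ'

theorem nonnegFrom_cons_star (u d : ℕ) (V : List (Bool × Bool)) :
    NonnegFrom u d ((true, true) :: V) ↔ NonnegFrom u d V := by
  constructor
  · intro h Q hQ
    have := h ((true, true) :: Q) (by simpa using hQ)
    simp at this; omega
  · intro h Q hQ
    rcases List.prefix_cons_iff.1 hQ with rfl | ⟨R, rfl, hR⟩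
    · exact h [] (by simp)
    · have := h R hR
      simp; omega

/-- The Motzkin condition for a concatenation of three words. -/
def MotzkinTriple (X Y Z : List (Option Bool)) : Prop :=
  X.count (some false) + Y.count (some false) + Z.count (some false) =
      X.count (some true) + Y.count (some true) + Z.count (some true) ∧
    NonnegFrom 0 0 (X.map stepMarks) ∧
    NonnegFrom (X.count (some true)) (X.count (some false)) (Y.map stepMarks) ∧
    NonnegFrom (X.count (some true) + Y.count (some true))
      (X.count (some false) + Y.count (some false)) (Z.map stepMarks)

theorem motzkinTriple_iff (X Y Z : List (Option Bool)) :
    MotzkinTriple X Y Z ↔ IsMotzkinWord (X ++ (Y ++ Z)) := by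
  have h := nonnegFrom_map_stepMarks 0 0 (X ++ (Y ++ Z))
  simp only [Nat.zero_add] at h
  rw [IsMotzkinWord, ← h, List.map_append, List.map_append, nonnegFrom_append, nonnegFrom_append]
  simp only [map_fst_map_stepMarks, map_snd_map_stepMarks, count_true_map_beq, Nat.zero_add,
    MotzkinTriple, List.count_append, Nat.add_assoc]

theorem motzkinTriple_iff_isBalanced (X Y Z : List (Option Bool)) :
    MotzkinTriple X Y Z ↔ IsBalanced (starWord X Y Z) := by
  have h : (∀ i, (((starWord X Y Z).take i).map Prod.snd).count true ≤
      (((starWord X Y Z).take i).map Prod.fst).count true) ↔ NonnegFrom 0 0 (starWord X Y Z) := by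
    constructor
    · intro h Q hQ
      rw [List.prefix_iff_eq_take.1 hQ]
      simpa using h _
    · intro h i
      simpa using h _ (List.take_prefix i _)
  rw [IsBalanced, h, starWord, nonnegFrom_append, nonnegFrom_cons_star, nonnegFrom_append,
    nonnegFrom_cons_star]
  simp only [map_fst_map_stepMarks, map_snd_map_stepMarks, count_true_map_beq, Nat.zero_add,
    MotzkinTriple, List.count_append, List.map_append, List.map_cons, List.count_cons_self]
  refine and_congr ?_ Iff.rfl
  omega

/-- The conditions under which the path of `starWord X Y Z` has the required statistics. -/
def GoodTriple (m : ℕ) (T : List (Option Bool) × List (Option Bool) × List (Option Bool)) : Prop :=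
  T.1.length + T.2.1.length + T.2.2.length + 2 = m ∧ MotzkinTriple T.1 T.2.1 T.2.2 ∧
  (markGap (T.1.count (some false)) ((starWord T.1 T.2.1 T.2.2).map Prod.fst) = 1 ∧
    markGap (T.1.count (some true) + 1) ((starWord T.1 T.2.1 T.2.2).map Prod.snd) = 1 ∧
    markGap (T.1.count (some false) + T.2.1.count (some false) + 1)
      ((starWord T.1 T.2.1 T.2.2).map Prod.fst) = 1 ∧
    markGap (T.1.count (some true) + T.2.1.count (some true) + 2)
      ((starWord T.1 T.2.1 T.2.2).map Prod.snd) = 1) ∧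
  T.1.count (some true) ≠ T.1.count (some false) + T.2.1.count (some false) ∧
  T.1.count (some true) ≠ T.1.count (some false) + T.2.1.count (some false) + 1

theorem count_map_stepMarks (W : List (Option Bool)) :
    (W.map stepMarks).count (true, false) = W.count (some true) ∧
      (W.map stepMarks).count (false, true) = W.count (some false) :=
  ⟨List.count_map_of_injective W stepMarks stepMarks_injective (some true),
    List.count_map_of_injective W stepMarks stepMarks_injective (some false)⟩

theorem twoStars_pathOf_iff {V : List (Bool × Bool)} (h : IsBalanced V) (k₁ k₂ : ℕ) :
    twoStars (V.length + 1) (pathOf V) k₁ k₂ ↔ ∃ p q, k₁ = p + 1 ∧ k₂ = q + 1 ∧ p < q ∧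
      q < V.length ∧ ∀ i (hi : i < V.length), V[i] = (true, true) ↔ i = p ∨ i = q := by
  have key : ∀ i (hi : i < V.length), (0 < rStat (pathOf V) (i + 1) ∧
      0 < sStat (pathOf V) (i + 1)) ↔ V[i] = (true, true) := fun i hi => by
    rw [rStat_pathOf_pos h i hi, sStat_pathOf_pos h i hi, Prod.ext_iff, and_comm]
  constructor
  · rintro ⟨h1, h2, hlt, hs1, hs2, hu⟩
    simp only [Finset.mem_Icc, Nat.add_sub_cancel] at h1 h2 hu
    obtain ⟨p, rfl⟩ := Nat.exists_eq_add_of_le' h1.1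
    obtain ⟨q, rfl⟩ := Nat.exists_eq_add_of_le' h2.1
    refine ⟨p, q, rfl, rfl, by omega, by omega, fun i hi => ⟨fun hV => ?_, ?_⟩⟩
    · have := hu (i + 1) ⟨by omega, by omega⟩ ((key i hi).2 hV)
      omega
    · rintro (rfl | rfl)
      · exact (key i hi).1 hs1
      · exact (key i hi).1 hs2
  · rintro ⟨p, q, rfl, rfl, hpq, hq, hV⟩
    refine ⟨by simp; omega, by simp; omega, by omega, (key p (by omega)).2 ((hV _ _).2 (by simp)),
      (key q hq).2 ((hV _ _).2 (by simp)), fun j hj hs => ?_⟩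
    simp only [Finset.mem_Icc, Nat.add_sub_cancel] at hj
    obtain ⟨j, rfl⟩ := Nat.exists_eq_add_of_le' hj.1
    have := (hV j (by omega)).1 ((key j (by omega)).1 hs)
    omega

theorem starWord_take_fst (X Y Z : List (Option Bool)) :
    (starWord X Y Z).take X.length = X.map stepMarks := by
  rw [starWord, List.take_append_of_le_length (by simp)]
  simp

theorem starWord_take_snd (X Y Z : List (Option Bool)) :
    (starWord X Y Z).take (X.length + 1 + Y.length) =
      X.map stepMarks ++ (true, true) :: Y.map stepMarks := by
  have : starWord X Y Z = (X.map stepMarks ++ (true, true) :: Y.map stepMarks) ++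
      ((true, true) :: Z.map stepMarks) := by simp [starWord]
  rw [this, List.take_append_of_le_length (by simp; omega), List.take_of_length_le (by simp; omega)]

theorem stats_starWord {X Y Z : List (Option Bool)} (h : IsBalanced (starWord X Y Z)) :
    (LStat ((starWord X Y Z).length + 1) (pathOf (starWord X Y Z)) = 4 ∧ ∃ k₁ k₂,
      twoStars ((starWord X Y Z).length + 1) (pathOf (starWord X Y Z)) k₁ k₂ ∧
        xStat (pathOf (starWord X Y Z)) k₁ ≠ yStat (pathOf (starWord X Y Z)) k₂ ∧
        xStat (pathOf (starWord X Y Z)) k₁ ≠ yStat (pathOf (starWord X Y Z)) k₂ + 1) ↔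
      GoodTriple (starWord X Y Z).length (X, Y, Z) := by
  have hl := starWord_length X Y Z
  have hp : X.length < (starWord X Y Z).length := by omega
  have hq : X.length + 1 + Y.length < (starWord X Y Z).length := by omega
  have hstar : twoStars ((starWord X Y Z).length + 1) (pathOf (starWord X Y Z)) (X.length + 1)
      (X.length + 1 + Y.length + 1) := (twoStars_pathOf_iff h _ _).2
    ⟨_, _, rfl, rfl, by omega, hq, starWord_getElem_eq_iff X Y Z⟩
  have huniq : ∀ k₁ k₂, twoStars ((starWord X Y Z).length + 1) (pathOf (starWord X Y Z)) k₁ k₂ →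
      k₁ = X.length + 1 ∧ k₂ = X.length + 1 + Y.length + 1 := by
    intro k₁ k₂ hk
    obtain ⟨p, q, rfl, rfl, hpq, hq', hV⟩ := (twoStars_pathOf_iff h _ _).1 hk
    have a1 := (starWord_getElem_eq_iff X Y Z p (by omega)).1 ((hV p (by omega)).2 (by simp))
    have a2 := (starWord_getElem_eq_iff X Y Z q hq').1 ((hV q hq').2 (by simp))
    omega
  have hx : xStat (pathOf (starWord X Y Z)) (X.length + 1) = X.count (some true) := by
    rw [xStat_pathOf h _ hp.le, starWord_take_fst, (count_map_stepMarks X).1]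
  have hy : yStat (pathOf (starWord X Y Z)) (X.length + 1 + Y.length + 1) =
      X.count (some false) + Y.count (some false) := by
    rw [yStat_pathOf h _ hq.le, starWord_take_snd, List.count_append, List.count_cons,
      (count_map_stepMarks X).2, (count_map_stepMarks Y).2]
    simp
  have v1 := (starWord_getElem_eq_iff X Y Z _ hp).2 (Or.inl rfl)
  have v2 := (starWord_getElem_eq_iff X Y Z _ hq).2 (Or.inr rfl)
  rw [LStat_eq_four_iff hstar, rStat_pathOf h _ hp, sStat_pathOf h _ hp, rStat_pathOf h _ hq,
    sStat_pathOf h _ hq, v1, v2, starWord_take_fst, starWord_take_snd]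
  simp only [List.map_append, List.map_cons, List.count_append, List.count_cons_self,
    map_fst_map_stepMarks, map_snd_map_stepMarks, count_true_map_beq, if_true, GoodTriple,
    ← hl, motzkinTriple_iff_isBalanced, h, true_and, ← Nat.add_assoc]
  refine and_congr Iff.rfl ⟨?_, fun hne => ⟨_, _, hstar, by rwa [hx, hy]⟩⟩
  rintro ⟨k₁, k₂, hk, hne⟩
  obtain ⟨rfl, rfl⟩ := huniq k₁ k₂ hk
  rwa [hx, hy] at hne

theorem mem_dyckHat_iff (m : ℕ) (w : List Bool) :
    (IsDyckWord (m + 1) w ∧ LStat (m + 1) w = 4 ∧ ∃ k₁ k₂, twoStars (m + 1) w k₁ k₂ ∧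
        xStat w k₁ ≠ yStat w k₂ ∧ xStat w k₁ ≠ yStat w k₂ + 1) ↔
      ∃ T, GoodTriple m T ∧ pathOf (starWord T.1 T.2.1 T.2.2) = w := by
  constructor
  · rintro ⟨hD, hL⟩
    obtain ⟨V, rfl, hV, rfl⟩ := exists_pathOf hD
    obtain ⟨k₁, k₂, hk, -⟩ := hL.2
    obtain ⟨p, q, -, -, hpq, hq, hpos⟩ := (twoStars_pathOf_iff hV _ _).1 hk
    obtain ⟨X, Y, Z, rfl, -, -⟩ := exists_starWord V p q hpq hq hpos
    exact ⟨(X, Y, Z), (stats_starWord hV).1 hL, rfl⟩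
  · rintro ⟨⟨X, Y, Z⟩, hT, rfl⟩
    have hV := (motzkinTriple_iff_isBalanced X Y Z).1 hT.2.1
    have hm : (starWord X Y Z).length = m := by rw [starWord_length]; exact hT.1
    subst hm
    exact ⟨isDyckWord_pathOf hV, (stats_starWord hV).2 hT⟩

/-! ### Gaps between marks -/

theorem markGap_append_of_lt {l : List Bool} {j : ℕ} (m : List Bool) (h : j < l.count true) :
    markGap j (l ++ m) = markGap j l := by
  induction l generalizing j with
  | nil => simp at h
  | cons x l ih => cases j <;> cases x <;> simp_all [markGap]

theorem markGap_cons_true {j : ℕ} (l : List Bool) (h : 0 < j) :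
    markGap j (true :: l) = markGap (j - 1) l := by
  obtain ⟨j, rfl⟩ := Nat.exists_eq_add_of_le' h
  rfl

theorem markGap_append_of_gt {l : List Bool} {j : ℕ} (m : List Bool) (h : l.count true < j) :
    markGap j (l ++ m) = markGap (j - l.count true) m := by
  induction l generalizing j with
  | nil => simp
  | cons x l ih =>
    obtain _ | j := j
    · simp at h
    · cases x
      · simpa [markGap] using ih (by simpa using h)
      · simpa [markGap] using ih (by simpa using h)

theorem markGap_zero_le_append (l m : List Bool) :
    markGap 0 m ≤ markGap (l.count true) (l ++ m) := by
  induction l with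
  | nil => simp
  | cons x l ih =>
    cases x
    · simp only [List.cons_append, List.count_cons_of_ne (show false ≠ true by decide)]
      cases h : l.count true with
      | zero => rw [h] at ih; simp only [markGap]; omega
      | succ k => rw [h] at ih; simpa only [markGap] using ih
    · simpa [markGap] using ih

theorem starWord_map_fst (X Y Z : List (Option Bool)) :
    (starWord X Y Z).map Prod.fst = X.map (· == some true) ++
      true :: (Y.map (· == some true) ++ true :: Z.map (· == some true)) := by
  simp only [starWord, List.map_append, List.map_cons, map_fst_map_stepMarks]

theorem starWord_map_snd (X Y Z : List (Option Bool)) :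
    (starWord X Y Z).map Prod.snd = X.map (· == some false) ++
      true :: (Y.map (· == some false) ++ true :: Z.map (· == some false)) := by
  simp only [starWord, List.map_append, List.map_cons, map_snd_map_stepMarks]

theorem markGap_fst_left {X Y Z : List (Option Bool)} {j : ℕ} (h : j < X.count (some true)) :
    markGap j ((starWord X Y Z).map Prod.fst) = markGap j (X.map (· == some true)) := by
  rw [starWord_map_fst, markGap_append_of_lt _ (by rwa [count_true_map_beq])]

theorem markGap_fst_middle {X Y Z : List (Option Bool)} {j k : ℕ} (hj : 0 < j)
    (h : j < Y.count (some true)) (hk : k = X.count (some true) + 1 + j) :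
    markGap k ((starWord X Y Z).map Prod.fst) =
      markGap j (Y.map (· == some true)) := by
  rw [hk, starWord_map_fst, markGap_append_of_gt _ (by rw [count_true_map_beq]; omega),
    count_true_map_beq, markGap_cons_true _ (by omega),
    show X.count (some true) + 1 + j - X.count (some true) - 1 = j by omega,
    markGap_append_of_lt _ (by rwa [count_true_map_beq])]

theorem markGap_snd_middle {X Y Z : List (Option Bool)} {j k : ℕ} (hj : 0 < j)
    (h : j < Y.count (some false)) (hk : k = X.count (some false) + 1 + j) :
    markGap k ((starWord X Y Z).map Prod.snd) =
      markGap j (Y.map (· == some false)) := by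
  rw [hk, starWord_map_snd, markGap_append_of_gt _ (by rw [count_true_map_beq]; omega),
    count_true_map_beq, markGap_cons_true _ (by omega),
    show X.count (some false) + 1 + j - X.count (some false) - 1 = j by omega,
    markGap_append_of_lt _ (by rwa [count_true_map_beq])]

theorem markGap_snd_right {X Y Z : List (Option Bool)} {j k : ℕ} (hj : 0 < j)
    (hk : k = X.count (some false) + Y.count (some false) + 2 + j) :
    markGap k ((starWord X Y Z).map Prod.snd) = markGap j (Z.map (· == some false)) := by
  rw [hk, starWord_map_snd, markGap_append_of_gt _ (by rw [count_true_map_beq]; omega),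
    count_true_map_beq, markGap_cons_true _ (by omega),
    markGap_append_of_gt _ (by rw [count_true_map_beq]; omega), count_true_map_beq,
    markGap_cons_true _ (by omega)]
  congr 1; omega

/-! ### Duplicating letters -/

/-- Insert `c` right after the `j`-th occurrence of `c` in the word, and at the start for
`j = 0`. -/
def insAfter (c : Option Bool) : ℕ → List (Option Bool) → List (Option Bool)
  | 0, W => c :: W
  | _ + 1, [] => [c]
  | j + 1, b :: W => b :: insAfter c (if b = c then j else j + 1) W

/-- Insert `c` right before the `(j+1)`-st occurrence of `c` in the word, and at the end if there
is none. -/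
def insBefore (c : Option Bool) : ℕ → List (Option Bool) → List (Option Bool)
  | _, [] => [c]
  | 0, b :: W => if b = c then c :: b :: W else b :: insBefore c 0 W
  | j + 1, b :: W => b :: insBefore c (if b = c then j else j + 1) W

section

variable {c c' : Option Bool}

theorem insAfter_perm (j : ℕ) (W : List (Option Bool)) :
    (insAfter c j W).Perm (c :: W) := by
  induction W generalizing j with
  | nil => cases j <;> simp [insAfter]
  | cons b W ih =>
    cases j with
    | zero => simp [insAfter]
    | succ j => exact ((ih _).cons b).trans (List.Perm.swap c b W)

theorem insBefore_perm (j : ℕ) (W : List (Option Bool)) :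
    (insBefore c j W).Perm (c :: W) := by
  induction W generalizing j with
  | nil => cases j <;> simp [insBefore]
  | cons b W ih =>
    cases j with
    | zero =>
      by_cases h : b = c
      · simp [insBefore, h]
      · simp only [insBefore, h, if_false]
        exact ((ih _).cons b).trans (List.Perm.swap c b W)
    | succ j => exact ((ih _).cons b).trans (List.Perm.swap c b W)

theorem insAfter_injective (c : Option Bool) (j : ℕ) : Function.Injective (insAfter c j) := by
  intro W W' h
  have hl : W.length = W'.length := by
    have h1 := (insAfter_perm (c := c) j W).length_eq
    rw [h, (insAfter_perm (c := c) j W').length_eq] at h1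
    simpa using h1.symm
  induction W generalizing j W' with
  | nil => exact (List.eq_nil_of_length_eq_zero hl.symm).symm
  | cons b W ih =>
    obtain _ | ⟨b', W'⟩ := W'
    · simp at hl
    · cases j with
      | zero => simpa [insAfter] using h
      | succ j =>
        simp only [insAfter, List.cons.injEq] at h
        obtain ⟨rfl, h⟩ := h
        rw [ih _ h (by simpa using hl)]

theorem insBefore_injective (c : Option Bool) (j : ℕ) : Function.Injective (insBefore c j) := by
  intro W W' h
  have hl : W.length = W'.length := by
    have h1 := (insBefore_perm (c := c) j W).length_eq
    rw [h, (insBefore_perm (c := c) j W').length_eq] at h1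
    simpa using h1.symm
  induction W generalizing j W' with
  | nil => exact (List.eq_nil_of_length_eq_zero hl.symm).symm
  | cons b W ih =>
    obtain _ | ⟨b', W'⟩ := W'
    · simp at hl
    · cases j with
      | zero =>
        simp only [insBefore] at h
        split_ifs at h with h1 h2 h2
        · simpa [h1, h2] using h
        · simp only [List.cons.injEq] at h
          exact (h2 h.1.symm).elim
        · simp only [List.cons.injEq] at h
          exact (h1 h.1).elim
        · simp only [List.cons.injEq] at h
          obtain ⟨rfl, h⟩ := h
          rw [ih _ h (by simpa using hl)]
      | succ j =>
        simp only [insBefore, List.cons.injEq] at h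
        obtain ⟨rfl, h⟩ := h
        rw [ih _ h (by simpa using hl)]

theorem insAfter_count_self (j : ℕ) (W : List (Option Bool)) :
    (insAfter c j W).count c = W.count c + 1 := by
  simpa using (insAfter_perm (c := c) j W).count_eq c

theorem insAfter_count_of_ne (h : c ≠ c') (j : ℕ) (W : List (Option Bool)) :
    (insAfter c j W).count c' = W.count c' := by
  simpa [List.count_cons, h] using (insAfter_perm (c := c) j W).count_eq c'

theorem insBefore_count_self (j : ℕ) (W : List (Option Bool)) :
    (insBefore c j W).count c = W.count c + 1 := by
  simpa using (insBefore_perm (c := c) j W).count_eq c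

theorem insBefore_count_of_ne (h : c ≠ c') (j : ℕ) (W : List (Option Bool)) :
    (insBefore c j W).count c' = W.count c' := by
  simpa [List.count_cons, h] using (insBefore_perm (c := c) j W).count_eq c'

theorem markGap_insAfter {j : ℕ} {W : List (Option Bool)} (h : j ≤ W.count c) :
    markGap j ((insAfter c j W).map (· == c)) = 1 := by
  induction W generalizing j with
  | nil =>
    obtain rfl : j = 0 := by simpa using h
    simp [insAfter, markGap, beq_eq_decide]
  | cons b W ih =>
    cases j with
    | zero => simp [insAfter, markGap, beq_eq_decide]
    | succ j =>
      by_cases hb : b = c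
      · simpa [insAfter, hb, markGap, beq_eq_decide] using ih (j := j) (by simpa [hb] using h)
      · simpa [insAfter, hb, markGap, beq_eq_decide] using ih (j := j + 1) (by simpa [hb] using h)

theorem markGap_insAfter_succ {j k : ℕ} {W : List (Option Bool)} (h : j ≤ W.count c)
    (hjk : j ≤ k) :
    markGap (k + 1) ((insAfter c j W).map (· == c)) = markGap k (W.map (· == c)) := by
  induction W generalizing j k with
  | nil =>
    obtain rfl : j = 0 := by simpa using h
    simp [insAfter, markGap, beq_eq_decide]
  | cons b W ih =>
    cases j with
    | zero => simp [insAfter, markGap, beq_eq_decide]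
    | succ j =>
      obtain _ | k := k
      · omega
      by_cases hb : b = c
      · simpa [insAfter, hb, markGap, beq_eq_decide] using
          ih (j := j) (k := k) (by simpa [hb] using h) (by omega)
      · simpa [insAfter, hb, markGap, beq_eq_decide] using
          ih (j := j + 1) (by simpa [hb] using h) hjk

theorem exists_eq_insAfter {j : ℕ} {W : List (Option Bool)} (h : j < W.count c)
    (hg : markGap j (W.map (· == c)) = 1) : ∃ X, W = insAfter c j X := by
  induction W generalizing j with
  | nil => simp at h
  | cons b W ih =>
    cases j with
    | zero =>
      by_cases hb : b = c
      · exact ⟨W, by simp [insAfter, hb]⟩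
      · have := markGap_pos 0 (W.map (· == c)) (by simp)
        simp [beq_eq_false_iff_ne.2 hb, markGap] at hg
        omega
    | succ j =>
      by_cases hb : b = c
      · obtain ⟨X, hX⟩ := ih (j := j) (by simpa [hb] using h)
          (by simpa [hb, markGap, beq_eq_decide] using hg)
        exact ⟨b :: X, by simp [insAfter, hb, hX]⟩
      · obtain ⟨X, hX⟩ := ih (j := j + 1) (by simpa [hb] using h)
          (by simpa [hb, markGap, beq_eq_decide] using hg)
        exact ⟨b :: X, by simp [insAfter, hb, hX]⟩

theorem markGap_insAfter_of_ne (hc : c ≠ c') {j : ℕ} (k : ℕ) {W : List (Option Bool)} (hj : 0 < j)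
    (h : j ≤ W.count c) :
    markGap k ((insAfter c j W).map (· == c')) = 1 ↔ markGap k (W.map (· == c')) = 1 := by
  induction W generalizing j k with
  | nil => simp at h; omega
  | cons b W ih =>
    obtain ⟨j, rfl⟩ := Nat.exists_eq_add_of_le' hj
    by_cases hb' : b = c'
    · have hb : b ≠ c := fun h => hc (h ▸ hb')
      cases k with
      | zero => simp [insAfter, hb', markGap, beq_eq_decide]
      | succ k =>
        simpa [insAfter, hb, hb', markGap, beq_eq_decide, hc.symm] using
          ih (j := j + 1) k hj (by simpa [hb] using h)
    · cases k with
      | zero =>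
        have h1 := markGap_pos 0 (W.map (· == c')) (by simp)
        have h2 := markGap_pos 0
          ((insAfter c (if b = c then j else j + 1) W).map (· == c')) (by simp)
        simp [insAfter, beq_eq_false_iff_ne.2 hb', markGap]
        omega
      | succ k =>
        by_cases hb : b = c
        · obtain _ | j := j
          · simp [insAfter, hb, hc, markGap, beq_eq_decide]
          · simpa [insAfter, hb, hb', markGap, beq_eq_decide, hc] using
              ih (j := j + 1) (k + 1) (by omega) (by simpa [hb] using h)
        · simpa [insAfter, hb, hb', markGap, beq_eq_decide] using
            ih (j := j + 1) (k + 1) (by omega) (by simpa [hb] using h)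

theorem markGap_insBefore {j : ℕ} {W : List (Option Bool)} (h : j ≤ W.count c) :
    markGap (j + 1) ((insBefore c j W).map (· == c)) = 1 := by
  induction W generalizing j with
  | nil =>
    obtain rfl : j = 0 := by simpa using h
    simp [insBefore, markGap, beq_eq_decide]
  | cons b W ih =>
    by_cases hb : b = c
    · cases j with
      | zero => simp [insBefore, hb, markGap, beq_eq_decide]
      | succ j =>
        simpa [insBefore, hb, markGap, beq_eq_decide] using ih (j := j) (by simpa [hb] using h)
    · have := ih (j := j) (by simpa [hb] using h)
      cases j <;> simpa [insBefore, hb, markGap, beq_eq_decide] using this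

theorem markGap_insBefore_succ {j k : ℕ} {W : List (Option Bool)} (h : j ≤ W.count c)
    (hjk : j < k) :
    markGap (k + 1) ((insBefore c j W).map (· == c)) = markGap k (W.map (· == c)) := by
  induction W generalizing j k with
  | nil =>
    obtain rfl : j = 0 := by simpa using h
    simp [insBefore, markGap, beq_eq_decide]
  | cons b W ih =>
    obtain _ | k := k
    · omega
    by_cases hb : b = c
    · cases j with
      | zero => simp [insBefore, hb, markGap, beq_eq_decide]
      | succ j =>
        simpa [insBefore, hb, markGap, beq_eq_decide] using
          ih (j := j) (k := k) (by simpa [hb] using h) (by omega)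
    · have := ih (j := j) (k := k + 1) (by simpa [hb] using h) hjk
      cases j <;> simpa [insBefore, hb, markGap, beq_eq_decide] using this

theorem exists_eq_insBefore {j : ℕ} {W : List (Option Bool)}
    (hg : markGap (j + 1) (W.map (· == c)) = 1) : ∃ X, W = insBefore c j X := by
  induction W generalizing j with
  | nil => simp [markGap, beq_eq_decide] at hg
  | cons b W ih =>
    by_cases hb : b = c
    · cases j with
      | zero =>
        match W with
        | [] => exact ⟨[], by simp [insBefore, hb]⟩
        | b' :: W =>
          by_cases hb' : b' = c
          · exact ⟨b' :: W, by simp [insBefore, hb, hb']⟩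
          · have := markGap_pos 0 (W.map (· == c)) (by simp)
            simp [hb, beq_eq_false_iff_ne.2 hb', markGap] at hg
            omega
      | succ j =>
        obtain ⟨X, hX⟩ := ih (j := j) (by simpa [hb, markGap, beq_eq_decide] using hg)
        exact ⟨b :: X, by simp [insBefore, hb, hX]⟩
    · obtain ⟨X, hX⟩ := ih (j := j) (by simpa [hb, markGap, beq_eq_decide] using hg)
      exact ⟨b :: X, by cases j <;> simp [insBefore, hb, hX]⟩


theorem exists_prefix_of_prefix_insAfter (hc : c ≠ c') {j : ℕ} {W Q : List (Option Bool)}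
    (hQ : Q <+: insAfter c j W) : ∃ R, R <+: W ∧ Q.count c' = R.count c' ∧
      R.count c ≤ Q.count c := by
  induction W generalizing j Q with
  | nil =>
    have h : Q <+: [c] := by cases j <;> simpa [insAfter] using hQ
    have := h.sublist.count_le c'
    simp [hc] at this
    exact ⟨[], by simp, by simpa using this, by simp⟩
  | cons b W ih =>
    rcases j with _ | j <;> rcases List.prefix_cons_iff.1 hQ with rfl | ⟨R, rfl, hR⟩
    · exact ⟨[], by simp⟩
    · exact ⟨R, hR, by simp [hc]⟩
    · exact ⟨[], by simp⟩
    · obtain ⟨R', hR', h1, h2⟩ := ih hR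
      exact ⟨b :: R', by simpa using hR', by simp [List.count_cons, h1],
        by simpa [List.count_cons] using h2⟩

theorem exists_prefix_of_prefix_insBefore (hc : c ≠ c') {j : ℕ} {W Q : List (Option Bool)}
    (hQ : Q <+: insBefore c j W) : ∃ R, R <+: W ∧ Q.count c' = R.count c' ∧
      Q.count c ≤ R.count c + 1 := by
  induction W generalizing j Q with
  | nil =>
    have h : Q <+: [c] := by cases j <;> simpa [insBefore] using hQ
    have h1 := h.sublist.count_le c'
    have h2 := h.sublist.count_le c
    simp [hc] at h1 h2
    exact ⟨[], by simp, by simpa using h1, by simpa using h2⟩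
  | cons b W ih =>
    have : (b = c ∧ Q <+: c :: b :: W) ∨ ∃ j', Q <+: b :: insBefore c j' W := by
      cases j with
      | zero =>
        by_cases hb : b = c
        · exact Or.inl ⟨hb, by simpa [insBefore, hb] using hQ⟩
        · exact Or.inr ⟨0, by simpa [insBefore, hb] using hQ⟩
      | succ j => exact Or.inr ⟨_, hQ⟩
    rcases this with ⟨-, hQ⟩ | ⟨j', hQ⟩ <;>
      rcases List.prefix_cons_iff.1 hQ with rfl | ⟨R, rfl, hR⟩
    · exact ⟨[], by simp⟩
    · exact ⟨R, hR, by simp [hc]⟩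
    · exact ⟨[], by simp⟩
    · obtain ⟨R', hR', h1, h2⟩ := ih hR
      refine ⟨b :: R', by simpa using hR', by simp [List.count_cons, h1], ?_⟩
      simp only [List.count_cons]
      omega

theorem exists_prefix_insAfter (hc : c ≠ c') (j : ℕ) {W R : List (Option Bool)}
    (hR : R <+: W) : ∃ Q, Q <+: insAfter c j W ∧ Q.count c' = R.count c' ∧
      (Q.count c = R.count c ∨ Q.count c = R.count c + 1 ∧ j ≤ R.count c) := by
  induction W generalizing j R with
  | nil => exact ⟨[], by simp_all⟩
  | cons b W ih =>
    cases j with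
    | zero => exact ⟨c :: R, by simpa [insAfter] using hR, by simp [hc]⟩
    | succ j =>
      rcases List.prefix_cons_iff.1 hR with rfl | ⟨R, rfl, hR'⟩
      · exact ⟨[], by simp⟩
      · obtain ⟨Q, hQ, h1, h2⟩ := ih (if b = c then j else j + 1) hR'
        refine ⟨b :: Q, by simpa [insAfter] using hQ, by simp [List.count_cons, h1], ?_⟩
        by_cases hb : b = c <;> simp [hb] at h2 ⊢ <;> omega

theorem exists_prefix_insBefore (hc : c ≠ c') (j : ℕ) {W R : List (Option Bool)}
    (hR : R <+: W) : ∃ Q, Q <+: insBefore c j W ∧ Q.count c' = R.count c' ∧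
      (Q.count c = R.count c + 1 ∨ Q.count c = R.count c ∧ R.count c ≤ j) := by
  induction W generalizing j R with
  | nil => exact ⟨[], by simp_all⟩
  | cons b W ih =>
    rcases List.prefix_cons_iff.1 hR with rfl | ⟨R, rfl, hR'⟩
    · exact ⟨[], by simp⟩
    by_cases hb : b = c
    · subst hb
      cases j with
      | zero => exact ⟨b :: b :: R, by simpa [insBefore] using hR, by simp [hc]⟩
      | succ j =>
        obtain ⟨Q, hQ, h1, h2⟩ := ih j hR'
        refine ⟨b :: Q, by simpa [insBefore] using hQ, by simp [hc, h1], ?_⟩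
        simp; omega
    · obtain ⟨Q, hQ, h1, h2⟩ := ih j hR'
      refine ⟨b :: Q, by cases j <;> simpa [insBefore, hb] using hQ,
        by simp [List.count_cons, h1], by simpa [hb] using h2⟩

end

/-! ### The bijection -/

theorem motzkinTriple_iff_prefix (X Y Z : List (Option Bool)) :
    MotzkinTriple X Y Z ↔
      X.count (some false) + Y.count (some false) + Z.count (some false) =
        X.count (some true) + Y.count (some true) + Z.count (some true) ∧
      (∀ Q, Q <+: X → Q.count (some false) ≤ Q.count (some true)) ∧
      (∀ Q, Q <+: Y → X.count (some false) + Q.count (some false) ≤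
        X.count (some true) + Q.count (some true)) ∧
      (∀ Q, Q <+: Z → X.count (some false) + Y.count (some false) + Q.count (some false) ≤
        X.count (some true) + Y.count (some true) + Q.count (some true)) := by
  simp only [MotzkinTriple, nonnegFrom_map_stepMarks, Nat.zero_add]

/-- Insert two up steps and two down steps into a Motzkin path with two marked positions, so that
the gap conditions of `GoodTriple` hold. -/
def expand (T : List (Option Bool) × List (Option Bool) × List (Option Bool)) :
    List (Option Bool) × List (Option Bool) × List (Option Bool) :=
  let x₁ := T.1.count (some true)
  let y₁ := T.1.count (some false)
  let x₂ := x₁ + T.2.1.count (some true)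
  let y₂ := y₁ + T.2.1.count (some false)
  if y₂ ≤ x₁ then
    (insAfter (some true) y₁ (insAfter (some true) y₂ T.1), T.2.1,
      insBefore (some false) (x₁ - y₂) (insBefore (some false) (x₂ - y₂) T.2.2))
  else
    (insAfter (some true) y₁ T.1,
      insAfter (some true) (y₂ - x₁) (insBefore (some false) (x₁ - y₁) T.2.1),
      insBefore (some false) (x₂ - y₂) T.2.2)

theorem up_ne_down : (some true : Option Bool) ≠ some false := by decide

theorem down_ne_up : (some false : Option Bool) ≠ some true := by decide

theorem insAfter_up_count (j : ℕ) (W : List (Option Bool)) :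
    (insAfter (some true) j W).count (some true) = W.count (some true) + 1 ∧
      (insAfter (some true) j W).count (some false) = W.count (some false) :=
  ⟨insAfter_count_self j W, insAfter_count_of_ne up_ne_down j W⟩

theorem insBefore_down_count (j : ℕ) (W : List (Option Bool)) :
    (insBefore (some false) j W).count (some true) = W.count (some true) ∧
      (insBefore (some false) j W).count (some false) = W.count (some false) + 1 :=
  ⟨insBefore_count_of_ne down_ne_up j W, insBefore_count_self j W⟩

theorem expand_length (T : List (Option Bool) × List (Option Bool) × List (Option Bool)) :
    (expand T).1.length + (expand T).2.1.length + (expand T).2.2.length =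
      T.1.length + T.2.1.length + T.2.2.length + 4 := by
  unfold expand
  dsimp only
  split_ifs <;>
  · simp only [(insAfter_perm _ _).length_eq, (insBefore_perm _ _).length_eq, List.length_cons]
    omega

theorem expand_injective : Function.Injective expand := by
  rintro ⟨X, Y, Z⟩ ⟨X', Y', Z'⟩ h
  simp only [expand] at h
  split_ifs at h with h1 h2 h2 <;> simp only [Prod.mk.injEq] at h <;> obtain ⟨hX, hY, hZ⟩ := h <;>
    have hXu := congrArg (List.count (some true)) hX <;>
    have hXd := congrArg (List.count (some false)) hX <;>
    have hYu := congrArg (List.count (some true)) hY <;>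
    have hYd := congrArg (List.count (some false)) hY <;>
    simp only [insAfter_up_count, insBefore_down_count, Nat.add_right_cancel_iff]
      at hXu hXd hYu hYd
  · rw [hXd, hYd] at hX
    rw [hXu, hXd, hYu, hYd] at hZ
    rw [insAfter_injective _ _ (insAfter_injective _ _ hX), hY,
      insBefore_injective _ _ (insBefore_injective _ _ hZ)]
  · omega
  · omega
  · rw [hXd] at hX
    rw [hXu, hXd, hYd] at hY
    rw [hXu, hXd, hYu, hYd] at hZ
    rw [insAfter_injective _ _ hX, insBefore_injective _ _ (insAfter_injective _ _ hY),
      insBefore_injective _ _ hZ]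

theorem MotzkinTriple.expand {T : List (Option Bool) × List (Option Bool) × List (Option Bool)}
    (h : MotzkinTriple T.1 T.2.1 T.2.2) :
    MotzkinTriple (expand T).1 (expand T).2.1 (expand T).2.2 := by
  obtain ⟨X, Y, Z⟩ := T
  rw [motzkinTriple_iff_prefix] at h ⊢
  obtain ⟨h0, hX, hY, hZ⟩ := h
  dsimp only at h0 hX hY hZ
  unfold _root_.expand
  dsimp only
  split_ifs with hc <;> dsimp only <;>
    simp only [insAfter_up_count, insBefore_down_count] <;>
    refine ⟨by omega, fun Q hQ => ?_, fun Q hQ => ?_, fun Q hQ => ?_⟩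
  · obtain ⟨R, hR, h1, h2⟩ := exists_prefix_of_prefix_insAfter up_ne_down hQ
    obtain ⟨S, hS, h3, h4⟩ := exists_prefix_of_prefix_insAfter up_ne_down hR
    have := hX S hS
    omega
  · have := hY Q hQ
    omega
  · obtain ⟨R, hR, h1, h2⟩ := exists_prefix_of_prefix_insBefore down_ne_up hQ
    obtain ⟨S, hS, h3, h4⟩ := exists_prefix_of_prefix_insBefore down_ne_up hR
    have := hZ S hS
    omega
  · obtain ⟨R, hR, h1, h2⟩ := exists_prefix_of_prefix_insAfter up_ne_down hQ
    have := hX R hR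
    omega
  · obtain ⟨R, hR, h1, h2⟩ := exists_prefix_of_prefix_insAfter up_ne_down hQ
    obtain ⟨S, hS, h3, h4⟩ := exists_prefix_of_prefix_insBefore down_ne_up hR
    have := hY S hS
    omega
  · obtain ⟨R, hR, h1, h2⟩ := exists_prefix_of_prefix_insBefore down_ne_up hQ
    have := hZ R hR
    omega

theorem goodTriple_expand {m : ℕ}
    {T : List (Option Bool) × List (Option Bool) × List (Option Bool)}
    (hl : T.1.length + T.2.1.length + T.2.2.length + 6 = m)
    (h : MotzkinTriple T.1 T.2.1 T.2.2) : GoodTriple m (expand T) := by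
  refine ⟨by rw [expand_length]; omega, h.expand, ?_⟩
  obtain ⟨X, Y, Z⟩ := T
  obtain ⟨h0, hX, hY, hZ⟩ := (motzkinTriple_iff_prefix _ _ _).1 h
  dsimp only at h0 hX hY hZ
  have hX' := hX X List.prefix_rfl
  have hY' := hY Y List.prefix_rfl
  unfold expand
  dsimp only
  split_ifs with hc <;> dsimp only <;>
    simp only [insAfter_up_count, insBefore_down_count] <;>
    refine ⟨⟨?_, ?_, ?_, ?_⟩, by omega, by omega⟩
  · rw [markGap_fst_left (by simp only [insAfter_up_count]; omega)]
    exact markGap_insAfter (by simp only [insAfter_up_count]; omega)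
  · rw [markGap_snd_right (Nat.succ_pos (X.count (some true) -
        (X.count (some false) + Y.count (some false))))
      (by simp only [insAfter_up_count]; omega)]
    exact markGap_insBefore (by simp only [insBefore_down_count]; omega)
  · rw [markGap_fst_left (by simp only [insAfter_up_count]; omega),
      markGap_insAfter_succ (by simp only [insAfter_up_count]; omega) (by omega)]
    exact markGap_insAfter hc
  · rw [markGap_snd_right (Nat.succ_pos (X.count (some true) + Y.count (some true) -
        (X.count (some false) + Y.count (some false)) + 1))
      (by simp only [insAfter_up_count]; omega),
      markGap_insBefore_succ (by simp only [insBefore_down_count]; omega) (by omega)]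
    exact markGap_insBefore (by omega)
  · rw [markGap_fst_left (by simp only [insAfter_up_count]; omega)]
    exact markGap_insAfter hX'
  · rw [markGap_snd_middle
        (Nat.succ_pos (X.count (some true) - X.count (some false)))
        (by simp only [insAfter_up_count, insBefore_down_count]; omega)
        (by simp only [insAfter_up_count]; omega),
      markGap_insAfter_of_ne up_ne_down _ (by omega)
        (by simp only [insBefore_down_count]; omega)]
    exact markGap_insBefore (by omega)
  · rw [markGap_fst_middle
        (j := X.count (some false) + Y.count (some false) - X.count (some true)) (by omega)
        (by simp only [insAfter_up_count, insBefore_down_count]; omega)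
        (by simp only [insAfter_up_count]; omega)]
    exact markGap_insAfter (by simp only [insBefore_down_count]; omega)
  · rw [markGap_snd_right (Nat.succ_pos (X.count (some true) + Y.count (some true) -
        (X.count (some false) + Y.count (some false))))
      (by simp only [insAfter_up_count, insBefore_down_count]; omega)]
    exact markGap_insBefore (by omega)

theorem exists_expand_of_wide {X Y Z : List (Option Bool)} (hM : MotzkinTriple X Y Z)
    (h1 : markGap (X.count (some false)) ((starWord X Y Z).map Prod.fst) = 1)
    (h2 : markGap (X.count (some true) + 1) ((starWord X Y Z).map Prod.snd) = 1)
    (h3 : markGap (X.count (some false) + Y.count (some false) + 1)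
      ((starWord X Y Z).map Prod.fst) = 1)
    (h4 : markGap (X.count (some true) + Y.count (some true) + 2)
      ((starWord X Y Z).map Prod.snd) = 1)
    (hc : X.count (some false) + Y.count (some false) + 2 ≤ X.count (some true)) :
    ∃ T, MotzkinTriple T.1 T.2.1 T.2.2 ∧ expand T = (X, Y, Z) := by
  obtain ⟨h0, hX, hY, hZ⟩ := (motzkinTriple_iff_prefix _ _ _).1 hM
  rw [markGap_fst_left (by omega)] at h1 h3
  rw [markGap_snd_right (j := X.count (some true) -
    (X.count (some false) + Y.count (some false) + 2) + 1) (by omega) (by omega)] at h2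
  rw [markGap_snd_right (j := X.count (some true) + Y.count (some true) -
    (X.count (some false) + Y.count (some false) + 2) + 1 + 1) (by omega) (by omega)] at h4
  obtain ⟨X₁, hX₁⟩ := exists_eq_insAfter (by omega) h1
  have cX₁ := insAfter_up_count (X.count (some false)) X₁
  rw [← hX₁] at cX₁
  have g3 := markGap_insAfter_succ (c := some true) (j := X.count (some false))
    (k := X.count (some false) + Y.count (some false)) (W := X₁) (by omega) (by omega)
  rw [← hX₁, h3] at g3
  obtain ⟨X₂, hX₂⟩ := exists_eq_insAfter (by omega) g3.symm
  have cX₂ := insAfter_up_count (X.count (some false) + Y.count (some false)) X₂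
  rw [← hX₂] at cX₂
  obtain ⟨Z₁, hZ₁⟩ := exists_eq_insBefore h2
  have cZ₁ := insBefore_down_count (X.count (some true) -
    (X.count (some false) + Y.count (some false) + 2)) Z₁
  rw [← hZ₁] at cZ₁
  have g4 := markGap_insBefore_succ (c := some false) (j := X.count (some true) -
    (X.count (some false) + Y.count (some false) + 2)) (k := X.count (some true) +
    Y.count (some true) - (X.count (some false) + Y.count (some false) + 2) + 1) (W := Z₁)
    (by omega) (by omega)
  rw [← hZ₁, h4] at g4
  obtain ⟨Z₂, hZ₂⟩ := exists_eq_insBefore g4.symm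
  have cZ₂ := insBefore_down_count (X.count (some true) +
    Y.count (some true) - (X.count (some false) + Y.count (some false) + 2)) Z₂
  rw [← hZ₂] at cZ₂
  refine ⟨(X₂, Y, Z₂), (motzkinTriple_iff_prefix _ _ _).2 ⟨by dsimp only; omega, fun R hR => ?_,
    fun R hR => ?_, fun R hR => ?_⟩, ?_⟩
  · dsimp only at hR
    obtain ⟨Q, hQ, e1, e2⟩ := exists_prefix_insAfter up_ne_down
      (X.count (some false) + Y.count (some false)) hR
    rw [← hX₂] at hQ
    obtain ⟨P, hP, e3, e4⟩ := exists_prefix_insAfter up_ne_down (X.count (some false)) hQ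
    rw [← hX₁] at hP
    have := hX P hP
    have := hR.sublist.count_le (some false)
    omega
  · dsimp only at hR ⊢
    have := hR.sublist.count_le (some false)
    omega
  · dsimp only at hR ⊢
    obtain ⟨Q, hQ, e1, e2⟩ := exists_prefix_insBefore down_ne_up _ hR
    rw [← hZ₂] at hQ
    obtain ⟨P, hP, e3, e4⟩ := exists_prefix_insBefore down_ne_up _ hQ
    rw [← hZ₁] at hP
    have := hZ P hP
    omega
  · simp only [expand]
    rw [if_pos (by omega), ← cX₂.2, ← cX₁.2, ← hX₂, ← hX₁,
      show X₂.count (some true) = X.count (some true) - 2 by omega,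
      show X.count (some true) - 2 + Y.count (some true) -
        (X.count (some false) + Y.count (some false)) = X.count (some true) +
        Y.count (some true) - (X.count (some false) + Y.count (some false) + 2) by omega, ← hZ₂,
      show X.count (some true) - 2 - (X.count (some false) + Y.count (some false)) =
        X.count (some true) - (X.count (some false) + Y.count (some false) + 2) by omega, ← hZ₁]

theorem exists_expand_of_narrow {X Y Z : List (Option Bool)} (hM : MotzkinTriple X Y Z)
    (h1 : markGap (X.count (some false)) ((starWord X Y Z).map Prod.fst) = 1)
    (h2 : markGap (X.count (some true) + 1) ((starWord X Y Z).map Prod.snd) = 1)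
    (h3 : markGap (X.count (some false) + Y.count (some false) + 1)
      ((starWord X Y Z).map Prod.fst) = 1)
    (h4 : markGap (X.count (some true) + Y.count (some true) + 2)
      ((starWord X Y Z).map Prod.snd) = 1)
    (hc : X.count (some true) < X.count (some false) + Y.count (some false)) :
    ∃ T, MotzkinTriple T.1 T.2.1 T.2.2 ∧ expand T = (X, Y, Z) := by
  obtain ⟨h0, hX, hY, hZ⟩ := (motzkinTriple_iff_prefix _ _ _).1 hM
  have hX' := hX X List.prefix_rfl
  have hY' := hY Y List.prefix_rfl
  have lt₁ : X.count (some false) < X.count (some true) := by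
    refine lt_of_le_of_ne hX' fun e => ?_
    rw [← e, starWord_map_snd, markGap_append_of_gt _ (by rw [count_true_map_beq]; omega),
      count_true_map_beq, markGap_cons_true _ (by omega), Nat.add_sub_cancel_left] at h2
    match Y, hY, hc, h2 with
    | [], _, hc, _ => simp at hc; omega
    | b :: Y, hY, hc, h2 =>
      by_cases hb : b = some false
      · have := hY [b] (by simp)
        simp [hb] at this
        omega
      · have := markGap_pos 0 (Y.map (· == some false) ++ true :: Z.map (· == some false)) (by simp)
        simp [beq_eq_false_iff_ne.2 hb, markGap] at h2
        omega
  have lt₂ : X.count (some false) + Y.count (some false) <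
      X.count (some true) + Y.count (some true) := by
    refine lt_of_le_of_ne hY' fun e => ?_
    rw [e, starWord_map_fst, markGap_append_of_gt _ (by rw [count_true_map_beq]; omega),
      count_true_map_beq, markGap_cons_true _ (by omega)] at h3
    rcases List.eq_nil_or_concat' Y with rfl | ⟨Y', b, rfl⟩
    · simp at hc; omega
    · by_cases hb : b = some true
      · have := hY Y' (List.prefix_append _ _)
        simp [hb] at this e hc
        omega
      · have := markGap_zero_le_append (Y'.map (· == some true))
          (false :: true :: Z.map (· == some true))
        rw [count_true_map_beq] at this
        simp [hb, beq_eq_false_iff_ne.2 hb] at h3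
        rw [show X.count (some true) + Y'.count (some true) + 1 - X.count (some true) - 1 =
          Y'.count (some true) by omega] at h3
        simp [markGap] at this
        omega
  rw [markGap_fst_left lt₁] at h1
  rw [markGap_snd_middle (j := X.count (some true) - X.count (some false) - 1 + 1) (by omega)
    (by omega) (by omega)] at h2
  rw [markGap_fst_middle
    (j := X.count (some false) + Y.count (some false) - X.count (some true)) (by omega)
    (by omega) (by omega)] at h3
  rw [markGap_snd_right (j := X.count (some true) + Y.count (some true) -
    (X.count (some false) + Y.count (some false) + 1) + 1) (by omega) (by omega)] at h4
  obtain ⟨X₁, hX₁⟩ := exists_eq_insAfter lt₁ h1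
  have cX₁ := insAfter_up_count (X.count (some false)) X₁
  rw [← hX₁] at cX₁
  obtain ⟨Y₁, hY₁⟩ := exists_eq_insAfter (by omega) h3
  have cY₁ := insAfter_up_count
    (X.count (some false) + Y.count (some false) - X.count (some true)) Y₁
  rw [← hY₁] at cY₁
  have g2 := markGap_insAfter_of_ne up_ne_down
    (j := X.count (some false) + Y.count (some false) - X.count (some true))
    (X.count (some true) - X.count (some false) - 1 + 1) (W := Y₁) (by omega) (by omega)
  rw [← hY₁] at g2
  obtain ⟨Y₂, hY₂⟩ := exists_eq_insBefore (g2.1 h2)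
  have cY₂ := insBefore_down_count (X.count (some true) - X.count (some false) - 1) Y₂
  rw [← hY₂] at cY₂
  obtain ⟨Z₁, hZ₁⟩ := exists_eq_insBefore h4
  have cZ₁ := insBefore_down_count (X.count (some true) + Y.count (some true) -
    (X.count (some false) + Y.count (some false) + 1)) Z₁
  rw [← hZ₁] at cZ₁
  refine ⟨(X₁, Y₂, Z₁), (motzkinTriple_iff_prefix _ _ _).2 ⟨by dsimp only; omega, fun R hR => ?_,
    fun R hR => ?_, fun R hR => ?_⟩, ?_⟩
  · dsimp only at hR
    obtain ⟨Q, hQ, e1, e2⟩ := exists_prefix_insAfter up_ne_down (X.count (some false)) hR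
    rw [← hX₁] at hQ
    have := hX Q hQ
    have := hR.sublist.count_le (some false)
    omega
  · dsimp only at hR ⊢
    obtain ⟨Q, hQ, e1, e2⟩ := exists_prefix_insBefore down_ne_up _ hR
    rw [← hY₂] at hQ
    obtain ⟨P, hP, e3, e4⟩ := exists_prefix_insAfter up_ne_down _ hQ
    rw [← hY₁] at hP
    have := hY P hP
    have := hR.sublist.count_le (some false)
    omega
  · dsimp only at hR ⊢
    obtain ⟨Q, hQ, e1, e2⟩ := exists_prefix_insBefore down_ne_up _ hR
    rw [← hZ₁] at hQ
    have := hZ Q hQ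
    omega
  · simp only [expand]
    rw [if_neg (by omega), ← cX₁.2, ← hX₁,
      show X₁.count (some true) - X.count (some false) =
        X.count (some true) - X.count (some false) - 1 by omega, ← hY₂,
      show X.count (some false) + Y₂.count (some false) - X₁.count (some true) =
        X.count (some false) + Y.count (some false) - X.count (some true) by omega, ← hY₁,
      show X₁.count (some true) + Y₂.count (some true) -
        (X.count (some false) + Y₂.count (some false)) = X.count (some true) +
        Y.count (some true) - (X.count (some false) + Y.count (some false) + 1) by omega, ← hZ₁]

theorem bijOn_expand (m : ℕ) : Set.BijOn expand
    {T | T.1.length + T.2.1.length + T.2.2.length + 6 = m ∧ MotzkinTriple T.1 T.2.1 T.2.2}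
    {T | GoodTriple m T} := by
  refine ⟨fun T hT => goodTriple_expand hT.1 hT.2, expand_injective.injOn, ?_⟩
  rintro ⟨X, Y, Z⟩ ⟨hl, hM, ⟨h1, h2, h3, h4⟩, hne, hne'⟩
  dsimp only at hl hM h1 h2 h3 h4 hne hne'
  have : ∃ T, MotzkinTriple T.1 T.2.1 T.2.2 ∧ expand T = (X, Y, Z) := by
    rcases lt_or_ge (X.count (some true)) (X.count (some false) + Y.count (some false)) with hc | hc
    · exact exists_expand_of_narrow hM h1 h2 h3 h4 hc
    · exact exists_expand_of_wide hM h1 h2 h3 h4 (by omega)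
  obtain ⟨T, hT, e⟩ := this
  have hlen := expand_length T
  rw [e] at hlen
  exact ⟨T, ⟨by dsimp only at hlen; omega, hT⟩, e⟩

/-! ### Counting -/

theorem ncard_add_le (L : ℕ) : {p : ℕ × ℕ | p.1 + p.2 ≤ L}.ncard = (L + 2).choose 2 := by
  have key : ∀ L : ℕ, ((Finset.range (L + 1)).biUnion Finset.HasAntidiagonal.antidiagonal).card =
      (L + 2).choose 2 := by
    intro L
    rw [Finset.card_biUnion fun i _ j _ hij => Finset.disjoint_left.2 fun p hp hq => hij <| by
      rw [← Finset.HasAntidiagonal.mem_antidiagonal.1 hp,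
        Finset.HasAntidiagonal.mem_antidiagonal.1 hq]]
    simp only [Finset.Nat.card_antidiagonal]
    induction L with
    | zero => rfl
    | succ L ih =>
      rw [Finset.sum_range_succ, ih, Nat.choose_succ_succ' (L + 2) 1, Nat.choose_one_right,
        Nat.add_comm]
  rw [← key L, ← Set.ncard_coe_finset]
  congr 1
  ext p
  simp

theorem ncard_motzkinTriple (L : ℕ) :
    {T : List (Option Bool) × List (Option Bool) × List (Option Bool) |
      T.1.length + T.2.1.length + T.2.2.length = L ∧ MotzkinTriple T.1 T.2.1 T.2.2}.ncard =
      (L + 2).choose 2 * motzkin L := by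
  rw [← ncard_add_le, motzkin, ← Set.ncard_prod]
  refine Set.BijOn.ncard_eq (f := fun T => ((T.1.length, T.2.1.length), T.1 ++ (T.2.1 ++ T.2.2)))
    ⟨?_, ?_, ?_⟩
  · rintro ⟨X, Y, Z⟩ ⟨hl, hM⟩
    dsimp only at hl hM
    exact ⟨by simp; omega, by simp; omega, (motzkinTriple_iff X Y Z).1 hM⟩
  · rintro ⟨X, Y, Z⟩ - ⟨X', Y', Z'⟩ - h
    simp only [Prod.mk.injEq] at h
    obtain ⟨⟨hX, hY⟩, h⟩ := h
    obtain ⟨rfl, h'⟩ := List.append_inj h hX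
    obtain ⟨rfl, rfl⟩ := List.append_inj h' hY
    rfl
  · rintro ⟨⟨i, j⟩, w⟩ ⟨hij, hw, hM⟩
    change i + j ≤ L at hij
    change w.length = L at hw
    have e : w.take i ++ ((w.drop i).take j ++ (w.drop i).drop j) = w := by
      rw [List.take_append_drop, List.take_append_drop]
    refine ⟨(w.take i, (w.drop i).take j, (w.drop i).drop j), ⟨?_, ?_⟩, ?_⟩
    · simp; omega
    · exact (motzkinTriple_iff _ _ _).2 (by rwa [e])
    · simp only [e]
      simp; omega

/-- **Lemma.** For `n ≥ 7`, the number of Dyck paths `D ∈ 𝒟̂ₙ` with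
`x₁(D) ∉ {y₂(D), y₂(D)+1}` is `C(n-5, 2)·M_{n-7}`. -/
theorem dyckHat_x1_notin_count (n : ℕ) (hn : 7 ≤ n) :
    {w | IsDyckWord n w ∧ LStat n w = 4 ∧ ∃ k₁ k₂, twoStars n w k₁ k₂ ∧
        xStat w k₁ ≠ yStat w k₂ ∧ xStat w k₁ ≠ yStat w k₂ + 1}.ncard =
      Nat.choose (n - 5) 2 * motzkin (n - 7) := by
  obtain ⟨L, rfl⟩ := Nat.exists_eq_add_of_le' hn
  have himage : {w | IsDyckWord (L + 7) w ∧ LStat (L + 7) w = 4 ∧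
      ∃ k₁ k₂, twoStars (L + 7) w k₁ k₂ ∧
        xStat w k₁ ≠ yStat w k₂ ∧ xStat w k₁ ≠ yStat w k₂ + 1} =
      (fun T => pathOf (starWord T.1 T.2.1 T.2.2)) '' {T | GoodTriple (L + 6) T} :=
    Set.ext fun w => mem_dyckHat_iff (L + 6) w
  have hinj : Set.InjOn (fun T : List (Option Bool) × List (Option Bool) × List (Option Bool) =>
      pathOf (starWord T.1 T.2.1 T.2.2)) {T | GoodTriple (L + 6) T} := by
    rintro ⟨X, Y, Z⟩ hT ⟨X', Y', Z'⟩ hT' e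
    obtain ⟨rfl, rfl, rfl⟩ := starWord_injective <|
      pathOf_injOn ((motzkinTriple_iff_isBalanced _ _ _).1 hT.2.1)
        ((motzkinTriple_iff_isBalanced _ _ _).1 hT'.2.1)
        (by rw [starWord_length, starWord_length]; exact hT.1.trans hT'.1.symm) e
    rfl
  rw [himage, hinj.ncard_image, ← (bijOn_expand (L + 6)).ncard_eq]
  simpa using ncard_motzkinTriple L
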